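/- Let F = (f_1,…,f_t) be in ℤ[x,y] with t ≥ 2, generating a zero-dimensional ideal I in ℚ[x,y], with all f_i of y-degree at most d_y, total degree at most d ≥ 1, and all integer coefficients of absolute value at most e^h. Let G = (g_0,…,g_s) be the reduced minimal lexicographic Gröbner basis of I (for x ≺ y). If there exists i in {1,…,t} such that the coefficient of y^{d_y} in f_i is a nonzero integer constant, then there exists a nonzero integer β such that: (a) β·g_j ∈ ℤ[x,y] for all j; (b) |β| ≤ exp(C(t,d,Δ_1(d_y),h)) and every coefficient of every β·g_j has absolute value at most exp(C(t,d,Δ_1(d_y),h)); and (c) for every prime p not dividing β, the images of g_0,…,g_s in F_p[x,y] (well defined since all denominators divide β) form the reduced minimal lexicographic Gröbner basis of the ideal generated by f_1 mod p, …, f_t mod p in F_p[x,y]. -/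

import Mathlib

noncomputable section

open Polynomial

/-- Bivariate polynomials `k[x][y]`: the inner `X` is `x`, the outer `X` is `y`. -/
abbrev Biv (k : Type*) [CommRing k] : Type _ := Polynomial (Polynomial k)

variable {k : Type*} [CommRing k]

/-- The leading monomial of `f`, as the pair (y-exponent, x-exponent), for the
lexicographic order induced by `x ≺ y`. -/
def lmon (f : Biv k) : ℕ × ℕ := (f.natDegree, f.leadingCoeff.natDegree)

/-- Divisibility of monomials: `x^{p.2} y^{p.1}` divides `x^{q.2} y^{q.1}`. -/
def monDvd (p q : ℕ × ℕ) : Prop := p.1 ≤ q.1 ∧ p.2 ≤ q.2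

/-- Lexicographic comparison of monomials, `y`-exponent first. -/
def monLt (p q : ℕ × ℕ) : Prop := p.1 < q.1 ∨ (p.1 = q.1 ∧ p.2 < q.2)

/-- The monomial `x^{m.2} y^{m.1}` occurs in `f` (has a nonzero coefficient). -/
def occursIn (f : Biv k) (m : ℕ × ℕ) : Prop := (f.coeff m.1).coeff m.2 ≠ 0

/-- `G` is a Gröbner basis of `I` for the lexicographic order with `x ≺ y`:
its elements are nonzero elements of `I`, and the leading monomial of any nonzero
element of `I` is divisible by the leading monomial of some element of `G`. -/
def IsGB (G : List (Biv k)) (I : Ideal (Biv k)) : Prop :=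
  (∀ g ∈ G, g ≠ 0 ∧ g ∈ I) ∧
  ∀ f ∈ I, f ≠ 0 → ∃ g ∈ G, monDvd (lmon g) (lmon f)

/-- `f` is monic w.r.t. lex `x ≺ y`: the coefficient of its leading monomial is `1`. -/
def lexMonic (f : Biv k) : Prop := f.leadingCoeff.Monic

/-- `g 0, …, g s` is the reduced minimal lexicographic Gröbner basis of `I`,
listed in decreasing order of leading monomials. -/
def IsReducedGB {s : ℕ} (g : Fin (s + 1) → Biv k) (I : Ideal (Biv k)) : Prop :=
  IsGB (List.ofFn g) I ∧
  (∀ j, lexMonic (g j)) ∧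
  (∀ j l, j ≠ l → ∀ m : ℕ × ℕ, occursIn (g j) m → ¬ monDvd (lmon (g l)) m) ∧
  (∀ j l : Fin (s + 1), j < l → monLt (lmon (g l)) (lmon (g j)))

/-- Every monomial of `f` of `y`-degree `< i` is reduced w.r.t. the family `g`. -/
def reducedBelow {s : ℕ} (g : Fin (s + 1) → Biv k) (i : ℕ) (f : Biv k) : Prop :=
  ∀ m : ℕ × ℕ, m.1 < i → occursIn f m → ∀ j, ¬ monDvd (lmon (g j)) m

/-- `A` is the detaching sequence associated to the reduced Gröbner basis `g` of `I`:
`A i = 0` for `i < n_s`, `A (n_j) = g j`, and otherwise `A i` is obtained from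
`y * A (i-1)` by reducing the terms of `y`-degree `< i` modulo `g`
(so `A i - y * A (i-1)` lies in `I` and has `y`-degree `< i`, and the part of `A i`
of `y`-degree `< i` is reduced w.r.t. `g`). -/
def IsDetachingSeq {s : ℕ} (g : Fin (s + 1) → Biv k) (I : Ideal (Biv k))
    (A : ℕ → Biv k) : Prop :=
  (∀ i, i < (g (Fin.last s)).natDegree → A i = 0) ∧
  (∀ j, A ((g j).natDegree) = g j) ∧
  (∀ i, (g (Fin.last s)).natDegree ≤ i → (∀ j, (g j).natDegree ≠ i) →
    (A i - Polynomial.X * A (i - 1)) ∈ I ∧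
    (A i - Polynomial.X * A (i - 1)).degree < (i : WithBot ℕ) ∧
    reducedBelow g i (A i))

/-- The total degree of a bivariate polynomial `f ∈ k[x][y]`. -/
def totDeg {k : Type*} [CommRing k] (f : Biv k) : ℕ :=
  f.support.sup fun j => j + (f.coeff j).natDegree

/-- The height bound `B(n,d,h) = (N+1)h + N log N + log(n(d+1))` with
`N = n²d − nd + n`, for Hermite normal forms of `n × n` matrices of degree `≤ d`
and height `≤ h` over `ℤ[x]`. -/
def Bfun (n d : ℕ) (h : ℝ) : ℝ :=
  (((n ^ 2 * d - n * d + n : ℕ) : ℝ) + 1) * h +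
    ((n ^ 2 * d - n * d + n : ℕ) : ℝ) * Real.log ((n ^ 2 * d - n * d + n : ℕ) : ℝ) +
    Real.log ((n : ℝ) * ((d : ℝ) + 1))

/-- The height bound `C(t,d,D,h) = B(tD,d,h) + h + log 2`. -/
def Cfun (t d D : ℕ) (h : ℝ) : ℝ := Bfun (t * D) d h + h + Real.log 2

/-- `Δ₁(d_y) = d_y`. -/
def Delta1 (dy : ℕ) : ℕ := dy

/-- `Δ₂(d) = 2d′² + d′` with `d′ = max(d,3)`. -/
def Delta2 (d : ℕ) : ℕ := 2 * max d 3 ^ 2 + max d 3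

/-- `Δ₃(d) = 16d′⁴ + 2d′² + 2d′` with `d′ = max(d,3)`. -/
def Delta3 (d : ℕ) : ℕ := 16 * max d 3 ^ 4 + 2 * max d 3 ^ 2 + 2 * max d 3

/-- The inclusion `ℤ[x,y] → ℚ[x,y]`. -/
def toQ : Biv ℤ →+* Biv ℚ :=
  Polynomial.mapRingHom (Polynomial.mapRingHom (Int.castRingHom ℚ))

/-- The reduction `ℤ[x,y] → F_p[x,y]`. -/
def toP (p : ℕ) : Biv ℤ →+* Biv (ZMod p) :=
  Polynomial.mapRingHom (Polynomial.mapRingHom (Int.castRingHom (ZMod p)))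

/-!
Let `n = d_y`, let `t` be the number of generators, and let `c` be the nonzero constant coefficient
of `y ^ n` in some `f i`. Since this `f i` is regular in `y`, every element of the ideal of
`y`-degree less than `2 n` is a `k[x]`-combination of the `t n` polynomials `y ^ a * f i` with
`a < n`. A nonzero maximal minor of the matrix of these combinations allows the coefficients of a
combination to be reduced to degree at most `(t n - 1) d` in `x`, so the Gröbner basis lies in the
span `W` of the `N = t n ((t n - 1) d + 1)` monomial multiples `x ^ b * y ^ a * f i` with `a < n`
and `b ≤ (t n - 1) d`.

The leading monomials of `W` (the pivots) are leading monomials of the ideal, so a member `g j` of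
the reduced basis has coefficient `1` at its own leading monomial and `0` at the other pivots, and
Cramer's rule writes `g j = q j / D`, where `D` and the coefficients of `q j` are minors of order at
most `N` of the integer matrix of coefficients of these multiples. If `c` and `D` are nonzero in a
field `F`, the same pivots still determine the elements of the span over `F`. Hence no nonzero
element of the ideal over `F` avoids the multiples of the leading monomials of `g`, and the
reductions of the `q j / D` form a Gröbner basis. The denominator of the theorem is `β = c * D`.
-/

section Matrix

open Matrix

variable {m n R : Type*} [Fintype m] [CommRing R]

theorem mulVec_extend_zero [Fintype n] (A : Matrix m n R) {φ : m → n}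
    (hφ : Function.Injective φ) (w : m → R) :
    A *ᵥ Function.extend φ w 0 = A.submatrix id φ *ᵥ w := by
  funext i
  refine (Fintype.sum_of_injective φ hφ _ _ (fun j hj => ?_) fun r => ?_).symm
  · rw [Function.extend_apply' _ _ _ (by simpa using hj), Pi.zero_apply, mul_zero]
  · simp [hφ.extend_apply]

variable [DecidableEq m]

theorem exists_submatrix_det_ne_zero [Fintype n] {A : Matrix m n R} {U : Matrix n m R}
    (h : (A * U).det ≠ 0) : ∃ φ : m → n, (A.submatrix id φ).det ≠ 0 := by
  classical
  contrapose! h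
  have columns : (A * U)ᵀ = fun i => ∑ j, U j i • Aᵀ j := by
    ext i r
    simp [mul_apply, Finset.sum_apply, mul_comm]
  calc (A * U).det = detRowAlternating.toMultilinearMap fun i => ∑ j, U j i • Aᵀ j := by
        rw [← det_transpose, columns]; rfl
    _ = ∑ φ : m → n, (∏ i, U (φ i) i) • (A.submatrix id φ)ᵀ.det := by
        rw [MultilinearMap.map_sum]
        exact Finset.sum_congr rfl fun φ _ => MultilinearMap.map_smul_univ _ _ _
    _ = 0 := Finset.sum_eq_zero fun φ _ => by rw [det_transpose, h φ, smul_zero]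

theorem injective_of_det_submatrix_ne_zero {A : Matrix m n R} {φ : m → n}
    (h : (A.submatrix id φ).det ≠ 0) : Function.Injective φ := by
  intro i j hij
  by_contra hne
  exact h (det_zero_of_column_eq hne fun r => by simp [hij])

theorem natDegree_det_le_sum {M : Matrix m m R[X]} {e : m → ℕ}
    (h : ∀ i j, (M i j).natDegree ≤ e i) : M.det.natDegree ≤ ∑ i, e i := by
  rw [← det_transpose, det_apply]
  refine natDegree_sum_le_of_forall_le _ _ fun σ _ => (natDegree_smul_le _ _).trans ?_
  exact (natDegree_prod_le _ _).trans (Finset.sum_le_sum fun i _ => h _ _)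

theorem natDegree_adjugate_le {M : Matrix m m R[X]} {d : ℕ}
    (h : ∀ i j, (M i j).natDegree ≤ d) (i j : m) :
    (M.adjugate i j).natDegree ≤ (Fintype.card m - 1) * d := by
  have row_bound (r c) :
      (M.updateRow j (Pi.single i 1) r c).natDegree ≤ Function.update (fun _ => d) j 0 r := by
    rcases eq_or_ne r j with rfl | hr
    · rcases eq_or_ne c i with rfl | hc <;> simp [*]
    · simp [hr, h]
  rw [adjugate_apply]
  refine (natDegree_det_le_sum row_bound).trans_eq ?_
  simp [Finset.sum_update_of_mem, Finset.card_sdiff]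

end Matrix

section BoundedSolutions

open Matrix

variable {m n F : Type*} [Fintype m] [DecidableEq m] [Fintype n] [Field F]
  {A : Matrix m n F[X]} {φ : m → n}

theorem exists_mulVec_eq_natDegree_le_natDegree_det (hφ : (A.submatrix id φ).det ≠ 0)
    (u : n → F[X]) :
    ∃ u' : n → F[X], A *ᵥ u' = A *ᵥ u ∧
      ∀ j ∉ Set.range φ, (u' j).natDegree ≤ (A.submatrix id φ).det.natDegree := by
  classical
  set Δ := (A.submatrix id φ).det
  have φ_inj := injective_of_det_submatrix_ne_zero hφ
  let q : n → F[X] := fun j => u j / Δ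
  let w := (A.submatrix id φ).adjugate *ᵥ (A *ᵥ q)
  refine ⟨u - Δ • q + Function.extend φ w 0, ?_, fun j hj => ?_⟩
  · rw [mulVec_add, mulVec_sub, mulVec_smul, mulVec_extend_zero A φ_inj, mulVec_mulVec,
      mul_adjugate, smul_mulVec, one_mulVec, sub_add_cancel]
  · have remainder : u j - Δ * q j = u j % Δ :=
      sub_eq_of_eq_add' (EuclideanDomain.div_add_mod _ _).symm
    rw [Pi.add_apply, Function.extend_apply' _ _ _ (by simpa using hj), Pi.sub_apply,
      Pi.smul_apply, smul_eq_mul, Pi.zero_apply, add_zero, remainder]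
    exact natDegree_le_natDegree (degree_mod_lt _ hφ).le

theorem natDegree_le_of_natDegree_mulVec_le {M : Matrix m m F[X]} {d e : ℕ} (hM : M.det ≠ 0)
    (hd : ∀ i j, (M i j).natDegree ≤ d) {w : m → F[X]}
    (hw : ∀ i, ((M *ᵥ w) i).natDegree ≤ M.det.natDegree + e) (r : m) :
    (w r).natDegree ≤ (Fintype.card m - 1) * d + e := by
  rcases eq_or_ne (w r) 0 with hr | hr
  · simp [hr]
  have cramer_rule : M.det * w r = (M.adjugate *ᵥ (M *ᵥ w)) r := by
    rw [mulVec_mulVec, adjugate_mul, smul_mulVec, one_mulVec, Pi.smul_apply, smul_eq_mul]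
  have bound : (M.det * w r).natDegree ≤
      (Fintype.card m - 1) * d + (M.det.natDegree + e) := by
    rw [cramer_rule]
    exact natDegree_sum_le_of_forall_le _ _ fun i _ =>
      natDegree_mul_le.trans (add_le_add (natDegree_adjugate_le hd r i) (hw i))
  rw [natDegree_mul hM hr] at bound
  omega

theorem natDegree_apply_le_of_natDegree_mulVec_le {d : ℕ} (hd : ∀ i j, (A i j).natDegree ≤ d)
    (hφ : (A.submatrix id φ).det ≠ 0) {u : n → F[X]}
    (hu : ∀ i, ((A *ᵥ u) i).natDegree ≤ (A.submatrix id φ).det.natDegree)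
    (off_range : ∀ j ∉ Set.range φ, (u j).natDegree ≤ (A.submatrix id φ).det.natDegree) (r : m) :
    (u (φ r)).natDegree ≤ (Fintype.card n - 1) * d := by
  have φ_inj := injective_of_det_submatrix_ne_zero hφ
  let rest : n → F[X] := u - Function.extend φ (u ∘ φ) 0
  have on_minor : A.submatrix id φ *ᵥ (u ∘ φ) = A *ᵥ u - A *ᵥ rest := by
    rw [← mulVec_extend_zero A φ_inj, mulVec_sub, sub_sub_cancel]
  have rest_range (r) : rest (φ r) = 0 := by simp [rest, φ_inj.extend_apply]
  have rest_le (j) : (rest j).natDegree ≤ (A.submatrix id φ).det.natDegree := by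
    by_cases hj : j ∈ Set.range φ
    · obtain ⟨r, rfl⟩ := hj
      simp [rest_range]
    · simpa [rest, Function.extend_apply' _ _ _ hj] using off_range j hj
  obtain ⟨e, he, rest_image⟩ : ∃ e, (Fintype.card m - 1) * d + e ≤ (Fintype.card n - 1) * d ∧
      ∀ i, ((A *ᵥ rest) i).natDegree ≤ (A.submatrix id φ).det.natDegree + e := by
    by_cases φ_surj : Function.Surjective φ
    · have rest_zero : rest = 0 := funext (φ_surj.forall.2 rest_range)
      refine ⟨0, ?_, by simp [rest_zero]⟩
      rw [Fintype.card_of_bijective ⟨φ_inj, φ_surj⟩, add_zero]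
    · have card_lt := Fintype.card_lt_of_injective_not_surjective φ φ_inj φ_surj
      have card_pos : 0 < Fintype.card m := Fintype.card_pos_iff.2 ⟨r⟩
      refine ⟨d, ?_, fun i => natDegree_sum_le_of_forall_le _ _ fun j _ => ?_⟩
      · rw [← Nat.succ_mul]
        exact Nat.mul_le_mul_right _ (by omega)
      · rw [add_comm]
        exact natDegree_mul_le.trans (add_le_add (hd i j) (rest_le j))
  refine (natDegree_le_of_natDegree_mulVec_le (w := u ∘ φ) hφ (fun _ _ => hd _ _)
    (fun i => ?_) r).trans he
  rw [on_minor]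
  exact (natDegree_sub_le _ _).trans (max_le ((hu i).trans (Nat.le_add_right _ _)) (rest_image i))

theorem exists_mulVec_eq_natDegree_le {d : ℕ} (hd : ∀ i j, (A i j).natDegree ≤ d)
    (hφ : (A.submatrix id φ).det ≠ 0) {u : n → F[X]}
    (hu : ∀ i, ((A *ᵥ u) i).natDegree ≤ (A.submatrix id φ).det.natDegree) :
    ∃ u' : n → F[X], A *ᵥ u' = A *ᵥ u ∧
      ∀ j, (u' j).natDegree ≤ (Fintype.card n - 1) * d := by
  obtain ⟨u', hu', off_range⟩ := exists_mulVec_eq_natDegree_le_natDegree_det hφ u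
  refine ⟨u', hu', fun j => ?_⟩
  by_cases hj : j ∈ Set.range φ
  · obtain ⟨r, rfl⟩ := hj
    exact natDegree_apply_le_of_natDegree_mulVec_le hd hφ (hu' ▸ hu) off_range r
  · have card_lt : Fintype.card m < Fintype.card n :=
      Fintype.card_lt_of_injective_of_notMem φ (injective_of_det_submatrix_ne_zero hφ) hj
    calc (u' j).natDegree ≤ (A.submatrix id φ).det.natDegree := off_range j hj
      _ ≤ ∑ _i : m, d := natDegree_det_le_sum fun _ _ => hd _ _
      _ = Fintype.card m * d := by simp
      _ ≤ (Fintype.card n - 1) * d := Nat.mul_le_mul_right _ (by omega)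

end BoundedSolutions

section ModuleCramer

variable {σ R V : Type*} [CommRing R] [AddCommGroup V] [Module R V]

/-- The functionals `ℓ` jointly separate the points of the submodule `W` from zero. -/
def IsSeparating (ℓ : σ → V →ₗ[R] R) (W : Submodule R V) : Prop :=
  ∀ w ∈ W, (∀ s, ℓ s w = 0) → w = 0

/-- The matrix of values of the functionals `ℓ` (rows) on the vectors `u` (columns). -/
def evalMatrix (ℓ : σ → V →ₗ[R] R) (u : σ → V) : Matrix σ σ R := .of fun s s' => ℓ s (u s')

/-- The Cramer numerator: the combination of the vectors `u`, with coefficients in the adjugate of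
`evalMatrix ℓ u`, on which `ℓ s` takes the value `det (evalMatrix ℓ u)` and the other functionals
vanish. -/
def cramerNumerator [Fintype σ] [DecidableEq σ] (ℓ : σ → V →ₗ[R] R) (u : σ → V) (s : σ) : V :=
  ∑ s', (evalMatrix ℓ u).adjugate s' s • u s'

section Numerator

variable [Fintype σ] [DecidableEq σ]

theorem apply_cramerNumerator (ℓ : σ → V →ₗ[R] R) (u : σ → V) (ψ : V →ₗ[R] R) (s : σ) :
    ψ (cramerNumerator ℓ u s) = ((evalMatrix ℓ u).updateRow s fun s' => ψ (u s')).det := by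
  rw [← Matrix.cramer_transpose_apply, Matrix.cramer_eq_adjugate_mulVec]
  simp [cramerNumerator, Matrix.mulVec, dotProduct, ← Matrix.adjugate_transpose]

theorem functional_cramerNumerator (ℓ : σ → V →ₗ[R] R) (u : σ → V) (t s : σ) :
    ℓ t (cramerNumerator ℓ u s) = if t = s then (evalMatrix ℓ u).det else 0 := by
  rw [apply_cramerNumerator]
  split_ifs with hts
  · subst hts
    exact congrArg Matrix.det ((evalMatrix ℓ u).updateRow_eq_self t)
  · refine Matrix.det_zero_of_row_eq hts ?_
    rw [Matrix.updateRow_self, Matrix.updateRow_ne hts]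
    rfl

theorem IsSeparating.det_smul_eq_sum {ℓ : σ → V →ₗ[R] R} {W : Submodule R V}
    (hℓ : IsSeparating ℓ W) {u : σ → V} (hu : ∀ s, u s ∈ W) {w : V} (hw : w ∈ W) :
    (evalMatrix ℓ u).det • w = ∑ s, ℓ s w • cramerNumerator ℓ u s := by
  have numerator_mem (s) : cramerNumerator ℓ u s ∈ W :=
    W.sum_mem fun s' _ => W.smul_mem _ (hu s')
  refine sub_eq_zero.1 (hℓ _ ?_ fun t => ?_)
  · exact W.sub_mem (W.smul_mem _ hw) (W.sum_mem fun s _ => W.smul_mem _ (numerator_mem s))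
  · simp [functional_cramerNumerator, mul_comm]

end Numerator

variable {Γ S U : Type*} [CommRing S] [AddCommGroup U] [Module S U] {ρ : S →+* R}
  {ℓ : σ → U →ₗ[S] S} {ℓ' : σ → V →ₗ[R] R} {T : U →ₛₗ[ρ] V}

theorem IsSeparating.of_injective (hT : ∀ s x, ℓ' s (T x) = ρ (ℓ s x))
    (hTinj : Function.Injective T) {v : Γ → U}
    (hℓ : IsSeparating ℓ' (Submodule.span R (Set.range (T ∘ v)))) :
    IsSeparating ℓ (Submodule.span S (Set.range v)) := by
  have map_mem (w) (hw : w ∈ Submodule.span S (Set.range v)) :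
      T w ∈ Submodule.span R (Set.range (T ∘ v)) := by
    induction hw using Submodule.span_induction with
    | mem _ hx =>
      obtain ⟨γ, rfl⟩ := hx
      exact Submodule.subset_span ⟨γ, rfl⟩
    | zero => simp
    | add _ _ _ _ hx hy => simpa using add_mem hx hy
    | smul a x _ hx => simpa using Submodule.smul_mem _ _ hx
  intro w hw h0
  exact (map_eq_zero_iff T hTinj).1 (hℓ _ (map_mem w hw) fun s => by simp [hT, h0])

variable [Fintype σ] [DecidableEq σ]

theorem evalMatrix_comp (hT : ∀ s x, ℓ' s (T x) = ρ (ℓ s x)) (u : σ → U) :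
    evalMatrix ℓ' (T ∘ u) = ρ.mapMatrix (evalMatrix ℓ u) := by
  ext s s'
  simp [evalMatrix, hT]

theorem map_cramerNumerator (hT : ∀ s x, ℓ' s (T x) = ρ (ℓ s x)) (u : σ → U) (s : σ) :
    T (cramerNumerator ℓ u s) = cramerNumerator ℓ' (T ∘ u) s := by
  simp only [cramerNumerator, evalMatrix_comp hT, ← RingHom.map_adjugate, map_sum, map_smulₛₗ]
  rfl

theorem IsSeparating.comp_of_det_ne_zero [IsDomain R] [Module.IsTorsionFree R V]
    (hT : ∀ s x, ℓ' s (T x) = ρ (ℓ s x)) {v : Γ → U} {φ : σ → Γ}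
    (hℓ : IsSeparating ℓ (Submodule.span S (Set.range v)))
    (hdet : ρ (evalMatrix ℓ (v ∘ φ)).det ≠ 0) :
    IsSeparating ℓ' (Submodule.span R (Set.range (T ∘ v))) := by
  have expansion (w) (hw : w ∈ Submodule.span R (Set.range (T ∘ v))) :
      ρ (evalMatrix ℓ (v ∘ φ)).det • w =
        ∑ s, ℓ' s w • T (cramerNumerator ℓ (v ∘ φ) s) := by
    induction hw using Submodule.span_induction with
    | mem _ hx =>
      obtain ⟨γ, rfl⟩ := hx
      have over_base := congrArg T (hℓ.det_smul_eq_sum (u := v ∘ φ)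
        (fun s => Submodule.subset_span ⟨φ s, rfl⟩) (Submodule.subset_span ⟨γ, rfl⟩))
      simpa only [map_sum, map_smulₛₗ, ← hT, Function.comp_apply] using over_base
    | zero => simp
    | add _ _ _ _ hx hy => simp only [smul_add, map_add, add_smul, Finset.sum_add_distrib, hx, hy]
    | smul a x _ hx => simp only [smul_comm _ a, hx, Finset.smul_sum, map_smul, smul_assoc]
  intro w hw h0
  exact (smul_eq_zero.1 ((expansion w hw).trans (by simp [h0]))).resolve_left hdet

end ModuleCramer

section Monomials

/-- The coefficient of `x ^ m.2 * y ^ m.1`, as a linear functional. -/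
def bcoeff (m : ℕ × ℕ) : Biv k →ₗ[k] k :=
  lcoeff k m.2 ∘ₗ (lcoeff k[X] m.1).restrictScalars k

theorem bcoeff_apply (m : ℕ × ℕ) (f : Biv k) : bcoeff m f = (f.coeff m.1).coeff m.2 := rfl

/-- The monomial `x ^ e.2 * y ^ e.1`. -/
def bmonomial (e : ℕ × ℕ) : Biv k := C (X ^ e.2) * X ^ e.1

theorem bcoeff_ext {f g : Biv k} (h : ∀ m, bcoeff m f = bcoeff m g) : f = g :=
  Polynomial.ext fun a => Polynomial.ext fun b => h (a, b)

theorem C_C_mul_eq_smul (c : k) (f : Biv k) : C (C c) * f = c • f :=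
  bcoeff_ext fun m => by simp [bcoeff_apply]

theorem occursIn_iff {f : Biv k} {m : ℕ × ℕ} : occursIn f m ↔ bcoeff m f ≠ 0 := Iff.rfl

theorem lexMonic_iff {f : Biv k} : lexMonic f ↔ bcoeff (lmon f) f = 1 := Iff.rfl

theorem occursIn_lmon {f : Biv k} (hf : f ≠ 0) : occursIn f (lmon f) :=
  leadingCoeff_ne_zero.2 (leadingCoeff_ne_zero.2 hf)

theorem occursIn.toLex_le {f : Biv k} {m : ℕ × ℕ} (hm : occursIn f m) :
    toLex m ≤ toLex (lmon f) := by
  have y_le : m.1 ≤ f.natDegree := le_natDegree_of_ne_zero fun h0 => hm (by rw [h0, coeff_zero])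
  rcases y_le.lt_or_eq with y_lt | y_eq
  · exact Prod.Lex.toLex_le_toLex.2 (.inl y_lt)
  · refine Prod.Lex.toLex_le_toLex.2 (.inr ⟨y_eq, ?_⟩)
    rw [occursIn, y_eq] at hm
    exact le_natDegree_of_ne_zero hm

theorem lmon_eq_of_forall_toLex_le {f : Biv k} {μ : ℕ × ℕ} (hμ : occursIn f μ)
    (hle : ∀ m, occursIn f m → toLex m ≤ toLex μ) : lmon f = μ := by
  have hf : f ≠ 0 := by
    rintro rfl
    simp [occursIn] at hμ
  exact toLex.injective ((hle _ (occursIn_lmon hf)).antisymm hμ.toLex_le)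

theorem lmon_C (p : k[X]) : lmon (C p) = (0, p.natDegree) := by simp [lmon]

theorem lexMonic.ne_zero [Nontrivial k] {f : Biv k} (hf : lexMonic f) : f ≠ 0 := by
  rintro rfl
  exact Monic.ne_zero hf leadingCoeff_zero

theorem bcoeff_bmonomial_mul (e m : ℕ × ℕ) (f : Biv k) :
    bcoeff m (bmonomial e * f) = if e ≤ m then bcoeff (m - e) f else 0 := by
  simp only [bcoeff_apply, bmonomial, mul_assoc, coeff_C_mul, coeff_X_pow_mul', Prod.le_def]
  by_cases h1 : e.1 ≤ m.1 <;> by_cases h2 : e.2 ≤ m.2 <;> simp [h1, h2]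

theorem lmon_bmonomial_mul (e : ℕ × ℕ) {f : Biv k} (hf : f ≠ 0) :
    lmon (bmonomial e * f) = e + lmon f := by
  refine lmon_eq_of_forall_toLex_le ?_ fun m hm => ?_
  · rw [occursIn_iff, bcoeff_bmonomial_mul, if_pos (by simp), add_tsub_cancel_left]
    exact occursIn_lmon hf
  · rw [occursIn_iff, bcoeff_bmonomial_mul] at hm
    split_ifs at hm with hem
    · have quotient_le := occursIn.toLex_le (f := f) hm
      rw [Prod.Lex.toLex_le_toLex] at quotient_le ⊢
      simp only [Prod.le_def, Prod.fst_sub, Prod.snd_sub, Prod.fst_add, Prod.snd_add] at *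
      omega
    · exact absurd rfl hm

theorem bcoeff_bmonomial (e m : ℕ × ℕ) :
    bcoeff m (bmonomial e : Biv k) = if m = e then 1 else 0 := by
  simp only [bcoeff_apply, bmonomial, coeff_C_mul_X_pow, Prod.ext_iff]
  by_cases h1 : m.1 = e.1 <;> simp [h1, coeff_X_pow]

theorem lmon_bmonomial [Nontrivial k] (e : ℕ × ℕ) : lmon (bmonomial e : Biv k) = e := by
  refine lmon_eq_of_forall_toLex_le (by simp [occursIn_iff, bcoeff_bmonomial]) fun m hm => ?_
  rw [occursIn_iff, bcoeff_bmonomial] at hm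
  rw [(ite_ne_right_iff.1 hm).1]

theorem lexMonic_bmonomial [Nontrivial k] (e : ℕ × ℕ) : lexMonic (bmonomial e : Biv k) := by
  rw [lexMonic_iff, lmon_bmonomial, bcoeff_bmonomial, if_pos rfl]

theorem lexMonic.bmonomial_mul [Nontrivial k] (e : ℕ × ℕ) {f : Biv k} (hf : lexMonic f) :
    lexMonic (bmonomial e * f) := by
  rw [lexMonic_iff, lmon_bmonomial_mul e hf.ne_zero, bcoeff_bmonomial_mul, if_pos (by simp),
    add_tsub_cancel_left]
  exact hf

theorem lexMonic.toLex_lt_of_occursIn_sub {f q : Biv k} (hq : lexMonic q) (hlm : lmon q = lmon f)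
    {m : ℕ × ℕ} (hm : occursIn (f - bcoeff (lmon f) f • q) m) : toLex m < toLex (lmon f) := by
  rw [occursIn_iff, map_sub, map_smul] at hm
  refine lt_of_le_of_ne ?_ ?_
  · by_cases hfm : bcoeff m f = 0
    · have hqm : occursIn q m := fun h0 => hm (by simp [hfm, bcoeff_apply, h0])
      exact hlm ▸ hqm.toLex_le
    · exact occursIn.toLex_le hfm
  · intro heq
    have hqm : bcoeff m q = 1 := by
      rw [toLex.injective heq, ← hlm]
      exact hq
    exact hm (by rw [hqm, toLex.injective heq, smul_eq_mul, mul_one, sub_self])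

end Monomials

section Division

variable {ι : Type*}

/-- The exponents of the monomials divisible by the leading monomial of some `G j`. -/
def leadIdeal (G : ι → Biv k) : UpperSet (ℕ × ℕ) := upperClosure (Set.range fun j => lmon (G j))

theorem mem_leadIdeal {G : ι → Biv k} {m : ℕ × ℕ} : m ∈ leadIdeal G ↔ ∃ j, lmon (G j) ≤ m := by
  simp [leadIdeal]

variable [Nontrivial k] {G : ι → Biv k} {J : Ideal (Biv k)}

theorem exists_sub_mem_of_forall_toLex_lt (hG : ∀ j, lexMonic (G j)) (hJ : ∀ j, G j ∈ J)
    (ν : ℕ ×ₗ ℕ) (f : Biv k) (hf : ∀ m, occursIn f m → toLex m < ν) :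
    ∃ r, f - r ∈ J ∧ (∀ m, occursIn r m → toLex m < ν ∧ m ∉ leadIdeal G) ∧
      (lmon f ∉ leadIdeal G → bcoeff (lmon f) r = bcoeff (lmon f) f) := by
  induction ν using WellFoundedLT.induction generalizing f with
  | ind ν ih =>
    rcases eq_or_ne f 0 with rfl | hf0
    · exact ⟨0, by simp, by simp [occursIn], by simp⟩
    have lmon_lt := hf _ (occursIn_lmon hf0)
    by_cases hmem : lmon f ∈ leadIdeal G
    · obtain ⟨j, hj⟩ := mem_leadIdeal.1 hmem
      have lmon_eq : lmon (bmonomial (lmon f - lmon (G j)) * G j) = lmon f := by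
        rw [lmon_bmonomial_mul _ (hG j).ne_zero, tsub_add_cancel_of_le hj]
      obtain ⟨r, hr, hrm, -⟩ := ih _ lmon_lt _ fun m =>
        ((hG j).bmonomial_mul _).toLex_lt_of_occursIn_sub lmon_eq
      refine ⟨r, ?_, fun m hm => ⟨(hrm m hm).1.trans lmon_lt, (hrm m hm).2⟩, absurd hmem⟩
      rwa [sub_right_comm, Submodule.sub_mem_iff_left] at hr
      rw [← C_C_mul_eq_smul]
      exact J.mul_mem_left _ (J.mul_mem_left _ (hJ j))
    · obtain ⟨r, hr, hrm, -⟩ := ih _ lmon_lt _ fun m =>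
        (lexMonic_bmonomial _).toLex_lt_of_occursIn_sub (lmon_bmonomial (lmon f))
      have hr0 : bcoeff (lmon f) r = 0 := by
        by_contra hne
        exact (hrm _ hne).1.false
      refine ⟨r + bcoeff (lmon f) f • bmonomial (lmon f), ?_, fun m hm => ?_, fun _ => ?_⟩
      · rwa [add_comm, ← sub_sub]
      · rcases eq_or_ne m (lmon f) with rfl | hne
        · exact ⟨lmon_lt, hmem⟩
        · rw [occursIn_iff, map_add, map_smul, bcoeff_bmonomial, if_neg hne, smul_zero,
            add_zero] at hm
          exact ⟨(hrm m hm).1.trans lmon_lt, (hrm m hm).2⟩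
      · rw [map_add, map_smul, hr0, bcoeff_bmonomial, if_pos rfl, zero_add, smul_eq_mul, mul_one]

theorem exists_mem_ne_zero_forall_notMem_leadIdeal (hG : ∀ j, lexMonic (G j))
    (hJ : ∀ j, G j ∈ J) {f : Biv k} (hfJ : f ∈ J) (hf : f ≠ 0) (hlm : lmon f ∉ leadIdeal G) :
    ∃ r ∈ J, r ≠ 0 ∧ ∀ m, occursIn r m → m ∉ leadIdeal G := by
  have lt_succ (m) (hm : occursIn f m) : toLex m < toLex ((lmon f).1 + 1, 0) :=
    hm.toLex_le.trans_lt (Prod.Lex.toLex_lt_toLex.2 (.inl (Nat.lt_succ_self _)))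
  obtain ⟨r, hr, hrm, hlead⟩ := exists_sub_mem_of_forall_toLex_lt hG hJ _ f lt_succ
  refine ⟨r, (Submodule.sub_mem_iff_right _ hfJ).1 hr, ?_, fun m hm => (hrm m hm).2⟩
  rintro rfl
  exact occursIn_lmon hf (by rw [← bcoeff_apply, ← hlead hlm, map_zero])

end Division

section BaseChange

variable {k' : Type*} [CommRing k'] (ρ : k →+* k')

/-- The coefficientwise base change `k[x, y] → k'[x, y]`. -/
def bivMap : Biv k →+* Biv k' := mapRingHom (mapRingHom ρ)

/-- `bivMap` as a semilinear map. -/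
def bivMapₛₗ : Biv k →ₛₗ[ρ] Biv k' where
  toFun := bivMap ρ
  map_add' := map_add _
  map_smul' a f := by
    rw [← C_C_mul_eq_smul, ← C_C_mul_eq_smul, map_mul]
    simp [bivMap]

theorem bcoeff_bivMap (m : ℕ × ℕ) (f : Biv k) : bcoeff m (bivMap ρ f) = ρ (bcoeff m f) := by
  simp [bcoeff_apply, bivMap]

theorem bivMap_bmonomial (e : ℕ × ℕ) : bivMap ρ (bmonomial e) = bmonomial e := by
  simp [bivMap, bmonomial]

variable {ρ}

theorem bivMap_injective (hρ : Function.Injective ρ) : Function.Injective (bivMap ρ) :=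
  map_injective _ (map_injective ρ hρ)

end BaseChange

section LeadMonomials

/-- The set of leading monomials of the nonzero elements of `W`. -/
def leadMonomials (W : Submodule k (Biv k)) : Set (ℕ ×ₗ ℕ) :=
  {μ | ∃ w ∈ W, w ≠ 0 ∧ toLex (lmon w) = μ}

theorem isSeparating_bcoeff_leadMonomials (W : Submodule k (Biv k)) :
    IsSeparating (fun μ : leadMonomials W => bcoeff (ofLex μ.1)) W := by
  intro w hw h0
  by_contra hne
  exact occursIn_lmon hne (h0 ⟨toLex (lmon w), w, hw, hne, rfl⟩)

theorem finite_setOf_occursIn (f : Biv k) : {m | occursIn f m}.Finite := by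
  refine Set.Finite.subset
    (f.support.biUnion fun a => (f.coeff a).support.image (Prod.mk a)).finite_toSet fun m hm => ?_
  have hm1 : f.coeff m.1 ≠ 0 := fun h0 => hm (by rw [h0, coeff_zero])
  simpa using ⟨m.1, hm1, m.2, hm, rfl⟩

variable {Γ : Type*} {v : Γ → Biv k}

theorem exists_occursIn_of_mem_span {w : Biv k} {m : ℕ × ℕ}
    (hw : w ∈ Submodule.span k (Set.range v)) (hm : occursIn w m) : ∃ γ, occursIn (v γ) m := by
  by_contra! hv
  have span_le : Submodule.span k (Set.range v) ≤ LinearMap.ker (bcoeff m) := by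
    rw [Submodule.span_le]
    rintro _ ⟨γ, rfl⟩
    exact not_not.1 (hv γ)
  exact hm (span_le hw)

theorem finite_leadMonomials_span [Finite Γ] (v : Γ → Biv k) :
    (leadMonomials (Submodule.span k (Set.range v))).Finite := by
  have support_finite : {m | ∃ γ, occursIn (v γ) m}.Finite := by
    rw [Set.ofPred_exists]
    exact Set.finite_iUnion fun γ => finite_setOf_occursIn (v γ)
  refine (support_finite.image toLex).subset ?_
  rintro _ ⟨w, hw, hw0, rfl⟩
  exact ⟨lmon w, exists_occursIn_of_mem_span hw (occursIn_lmon hw0), rfl⟩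

theorem exists_det_evalMatrix_leadMonomials_ne_zero [IsDomain k] [Finite Γ]
    {W : Submodule k (Biv k)} [Fintype (leadMonomials W)]
    (hW : W ≤ Submodule.span k (Set.range v)) :
    ∃ φ : leadMonomials W → Γ,
      (evalMatrix (fun μ : leadMonomials W => bcoeff (ofLex μ.1)) (v ∘ φ)).det ≠ 0 := by
  cases nonempty_fintype Γ
  choose w w_mem w_ne lmon_w using fun μ : leadMonomials W => μ.2
  choose a ha using fun μ => (Submodule.mem_span_range_iff_exists_fun k).1 (hW (w_mem μ))
  let A : Matrix (leadMonomials W) Γ k := .of fun μ γ => bcoeff (ofLex μ.1) (v γ)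
  let E : Matrix Γ (leadMonomials W) k := .of fun γ μ => a μ γ
  have AE_apply (μ μ') : (A * E) μ μ' = bcoeff (ofLex μ.1) (w μ') := by
    simp [Matrix.mul_apply, A, E, ← ha μ', mul_comm]
  have triangular : (A * E).BlockTriangular id := by
    intro μ μ' hlt
    rw [AE_apply]
    by_contra hne
    exact (occursIn.toLex_le hne).not_gt ((lmon_w μ').trans_lt hlt)
  refine exists_submatrix_det_ne_zero (A := A) (U := E) ?_
  rw [Matrix.det_of_isUpperTriangular triangular, Finset.prod_ne_zero_iff]
  intro μ _
  rw [AE_apply, ← congrArg ofLex (lmon_w μ)]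
  exact occursIn_lmon (w_ne μ)

end LeadMonomials

section BoundedDegree

open Matrix

variable {ι R : Type*} [CommRing R] {f : ι → R[X]} {n : ℕ}

theorem mul_mem_degreeLT_two_mul {p q : R[X]} (hp : p ∈ degreeLT R n) (hq : q.natDegree ≤ n) :
    p * q ∈ degreeLT R (2 * n) := by
  rw [mem_degreeLT] at hp ⊢
  calc (p * q).degree ≤ p.degree + q.degree := degree_mul_le p q
    _ ≤ p.degree + n := by gcongr; exact degree_le_of_natDegree_le hq
    _ < n + n := WithBot.add_lt_add_right (WithBot.coe_ne_bot) hp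
    _ = (2 * n : ℕ) := by rw [two_mul, Nat.cast_add]

theorem mem_degreeLT_of_mul_mem_degreeLT_two_mul {p q : R[X]} (hq : q.Monic) (hqn : q.degree = n)
    (h : p * q ∈ degreeLT R (2 * n)) : p ∈ degreeLT R n := by
  rw [mem_degreeLT, hq.degree_mul, hqn, two_mul, Nat.cast_add] at h
  exact mem_degreeLT.2 (lt_of_add_lt_add_right h)

theorem sum_C_coeff_mul_X_pow_eq {p : R[X]} (hp : p ∈ degreeLT R n) :
    ∑ a : Fin n, C (p.coeff a) * X ^ (a : ℕ) = p := by
  rcases eq_or_ne p 0 with rfl | hp0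
  · simp
  rw [Fin.sum_univ_eq_sum_range fun a => C (p.coeff a) * X ^ a]
  exact (as_sum_range_C_mul_X_pow' p ((natDegree_lt_iff_degree_lt hp0).2 (mem_degreeLT.1 hp))).symm

theorem exists_mem_degreeLT_sum_mul_eq [Fintype ι] [Nontrivial R]
    (hf : ∀ i, (f i).natDegree ≤ n) {i₀ : ι} (hlead : IsUnit ((f i₀).coeff n)) {v : R[X]}
    (hv : v ∈ Ideal.span (Set.range f)) (hvn : v ∈ degreeLT R (2 * n)) :
    ∃ b : ι → R[X], (∀ i, b i ∈ degreeLT R n) ∧ ∑ i, b i * f i = v := by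
  classical
  obtain ⟨a, rfl⟩ := Ideal.mem_span_range_iff_exists_fun.1 hv
  obtain ⟨c, hc⟩ := hlead.exists_left_inv
  set q := C c * f i₀ with hq
  have q_coeff : q.coeff n = 1 := by rw [hq, coeff_C_mul, hc]
  have q_natDegree_le : q.natDegree ≤ n := (natDegree_C_mul_le _ _).trans (hf i₀)
  have q_monic : q.Monic := monic_of_natDegree_le_of_coeff_eq_one n q_natDegree_le q_coeff
  have q_degree : q.degree = n :=
    degree_eq_of_le_of_coeff_ne_zero (degree_le_of_natDegree_le q_natDegree_le) (by simp [q_coeff])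
  have rem_mem (i) : a i %ₘ q ∈ degreeLT R n :=
    mem_degreeLT.2 (q_degree ▸ degree_modByMonic_lt (a i) q_monic)
  set z := ∑ i, (a i /ₘ q) * f i with hz
  have division : ∑ i, a i * f i = ∑ i, (a i %ₘ q) * f i + z * q := by
    rw [hz, Finset.sum_mul, ← Finset.sum_add_distrib]
    refine Finset.sum_congr rfl fun i _ => ?_
    conv_lhs => rw [← modByMonic_add_div (a i) q]
    ring
  have z_mem : z ∈ degreeLT R n := by
    refine mem_degreeLT_of_mul_mem_degreeLT_two_mul q_monic q_degree ?_
    rw [← sub_eq_of_eq_add' division]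
    exact sub_mem hvn (sum_mem fun i _ => mul_mem_degreeLT_two_mul (rem_mem i) (hf i))
  refine ⟨fun i => a i %ₘ q + if i = i₀ then c • z else 0, fun i => ?_, ?_⟩
  · refine add_mem (rem_mem i) ?_
    split_ifs
    exacts [Submodule.smul_mem _ c z_mem, zero_mem _]
  · simp only [add_mul, Finset.sum_add_distrib, ite_mul, zero_mul, Finset.sum_ite_eq',
      Finset.mem_univ, if_true, division, hq, smul_eq_C_mul]
    ring

/-- The Sylvester-type matrix whose columns are the coefficient vectors, truncated at degree
`2 * n`, of the products `X ^ a * f i` with `a < n`. -/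
def shiftMatrix (f : ι → R[X]) (n : ℕ) : Matrix (Fin (2 * n)) (ι × Fin n) R :=
  .of fun r j => (X ^ (j.2 : ℕ) * f j.1).coeff r

theorem shiftMatrix_mulVec_eq_iff [Fintype ι] (hf : ∀ i, (f i).natDegree ≤ n) {v : R[X]}
    (hv : v ∈ degreeLT R (2 * n)) {u : ι × Fin n → R} :
    (shiftMatrix f n *ᵥ u = fun r : Fin (2 * n) => v.coeff r) ↔
      ∑ j, C (u j) * (X ^ (j.2 : ℕ) * f j.1) = v := by
  have sum_mem : ∑ j, C (u j) * (X ^ (j.2 : ℕ) * f j.1) ∈ degreeLT R (2 * n) := by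
    refine Submodule.sum_mem _ fun j _ => ?_
    rw [← smul_eq_C_mul]
    refine Submodule.smul_mem _ _ (mul_mem_degreeLT_two_mul (mem_degreeLT.2 ?_) (hf j.1))
    exact (degree_X_pow_le _).trans_lt (by exact_mod_cast j.2.2)
  have mulVec_apply (r) : (shiftMatrix f n *ᵥ u) r =
      (∑ j, C (u j) * (X ^ (j.2 : ℕ) * f j.1)).coeff r := by
    simp [shiftMatrix, mulVec, dotProduct, mul_comm (u _)]
  refine ⟨fun h => ?_, fun h => funext fun r => by rw [mulVec_apply, h]⟩
  rw [← sum_C_coeff_mul_X_pow_eq sum_mem, ← sum_C_coeff_mul_X_pow_eq hv]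
  simp only [← mulVec_apply, h]

theorem exists_shiftMatrix_mulVec_eq [Fintype ι] [Nontrivial R]
    (hf : ∀ i, (f i).natDegree ≤ n) {i₀ : ι} (hlead : IsUnit ((f i₀).coeff n)) {v : R[X]}
    (hv : v ∈ Ideal.span (Set.range f)) (hvn : v ∈ degreeLT R (2 * n)) :
    ∃ u, shiftMatrix f n *ᵥ u = fun r : Fin (2 * n) => v.coeff r := by
  obtain ⟨b, hb, rfl⟩ := exists_mem_degreeLT_sum_mul_eq hf hlead hv hvn
  refine ⟨fun j => (b j.1).coeff j.2, (shiftMatrix_mulVec_eq_iff hf hvn).2 ?_⟩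
  rw [Fintype.sum_prod_type]
  refine Finset.sum_congr rfl fun i _ => ?_
  conv_rhs => rw [← sum_C_coeff_mul_X_pow_eq (hb i)]
  simp only [Finset.sum_mul, mul_assoc]

theorem exists_det_submatrix_shiftMatrix_ne_zero [Finite ι] [IsDomain R]
    (hf : ∀ i, (f i).natDegree ≤ n) {i₀ : ι} (hlead : IsUnit ((f i₀).coeff n)) {P : R} (hP : P ≠ 0)
    (hPf : C P ∈ Ideal.span (Set.range f)) :
    ∃ φ : Fin (2 * n) → ι × Fin n, ((shiftMatrix f n).submatrix id φ).det ≠ 0 := by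
  cases nonempty_fintype ι
  have monomial_mem (r : Fin (2 * n)) : C P * X ^ (r : ℕ) ∈ degreeLT R (2 * n) :=
    mem_degreeLT.2 ((degree_C_mul_X_pow_le _ _).trans_lt (by exact_mod_cast r.2))
  choose u hu using fun r : Fin (2 * n) => exists_shiftMatrix_mulVec_eq hf hlead
    (Ideal.mul_mem_right (X ^ (r : ℕ)) _ hPf) (monomial_mem r)
  let U : Matrix (ι × Fin n) (Fin (2 * n)) R := .of fun j r => u r j
  have mul_eq : shiftMatrix f n * U = P • 1 := by
    ext r' r
    simpa [Matrix.one_apply, coeff_X_pow, Fin.ext_iff] using! congrFun (hu r) r'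
  refine exists_submatrix_det_ne_zero (U := U) ?_
  rw [mul_eq, det_smul, det_one, mul_one]
  exact pow_ne_zero _ hP

theorem C_det_submatrix_shiftMatrix_mem [Finite ι] (hn : 0 < n)
    (hf : ∀ i, (f i).natDegree ≤ n) (φ : Fin (2 * n) → ι × Fin n) :
    C ((shiftMatrix f n).submatrix id φ).det ∈ Ideal.span (Set.range f) := by
  cases nonempty_fintype ι
  set M := (shiftMatrix f n).submatrix id φ
  by_cases hdet : M.det = 0
  · simp [hdet]
  let w : Fin (2 * n) → R := fun r => M.adjugate r ⟨0, by omega⟩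
  have C_det_mem : C M.det ∈ degreeLT R (2 * n) :=
    mem_degreeLT.2 (degree_C_le.trans_lt (by exact_mod_cast (by omega : 0 < 2 * n)))
  have mulVec_eq : shiftMatrix f n *ᵥ Function.extend φ w 0 =
      fun r : Fin (2 * n) => (C M.det).coeff r := by
    rw [mulVec_extend_zero _ (injective_of_det_submatrix_ne_zero hdet)]
    funext r
    refine (congrFun (congrFun (mul_adjugate M) r) ⟨0, by omega⟩).trans ?_
    simp [coeff_C, Matrix.one_apply, Fin.ext_iff]
  rw [← (shiftMatrix_mulVec_eq_iff hf C_det_mem).1 mulVec_eq]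
  exact sum_mem fun j _ => Ideal.mul_mem_left _ _ (Ideal.mul_mem_left _ _
    (Ideal.subset_span ⟨j.1, rfl⟩))

end BoundedDegree

section Shifts

variable {ι : Type*}

/-- The family `f` has degree at most `n` in `y` and at most `d` in `x`, and the coefficient of
`y ^ n` in `f i₀` is the constant `c`. -/
structure IsYRegular (f : ι → Biv k) (n d : ℕ) (i₀ : ι) (c : k) : Prop where
  natDegree_le : ∀ i, (f i).natDegree ≤ n
  natDegree_coeff_le : ∀ i a, ((f i).coeff a).natDegree ≤ d
  coeff_eq : (f i₀).coeff n = C c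

/-- The monomial multiples `x ^ b * y ^ a * f i` with `a < n` and `b ≤ K`. -/
def shifts (f : ι → Biv k) (n K : ℕ) (γ : ι × Fin n × Fin (K + 1)) : Biv k :=
  bmonomial (γ.2.1, γ.2.2) * f γ.1

/-- The space spanned by `shifts f n K`, which approximates the ideal generated by `f`. -/
def shiftSpan (f : ι → Biv k) (n K : ℕ) : Submodule k (Biv k) :=
  Submodule.span k (Set.range (shifts f n K))

variable {f : ι → Biv k} {n d K : ℕ} {i₀ : ι} {c : k}

theorem IsYRegular.lmon_eq (hf : IsYRegular f n d i₀ c) (hc : c ≠ 0) : lmon (f i₀) = (n, 0) := by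
  have natDegree_eq : (f i₀).natDegree = n :=
    natDegree_eq_of_le_of_coeff_ne_zero (hf.natDegree_le i₀) (by simpa [hf.coeff_eq] using hc)
  simp [lmon, leadingCoeff, natDegree_eq, hf.coeff_eq]

theorem IsYRegular.ne_zero (hf : IsYRegular f n d i₀ c) (hc : c ≠ 0) : f i₀ ≠ 0 := by
  intro h0
  have lead_eq := hf.coeff_eq
  rw [h0, coeff_zero, eq_comm, C_eq_zero] at lead_eq
  exact hc lead_eq

theorem IsYRegular.eq_C_C (hf : IsYRegular f 0 d i₀ c) : f i₀ = C (C c) := by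
  rw [eq_C_of_natDegree_le_zero (hf.natDegree_le i₀), hf.coeff_eq]

theorem shiftSpan_le_ideal {w : Biv k} (hw : w ∈ shiftSpan f n K) :
    w ∈ Ideal.span (Set.range f) := by
  suffices shiftSpan f n K ≤ (Ideal.span (Set.range f)).restrictScalars k from this hw
  rw [shiftSpan, Submodule.span_le]
  rintro _ ⟨γ, rfl⟩
  exact Ideal.mul_mem_left _ _ (Ideal.subset_span ⟨γ.1, rfl⟩)

theorem C_mul_X_pow_mul_mem_shiftSpan {q : k[X]} (hq : q.natDegree ≤ K) (i : ι) (a : Fin n) :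
    C q * (X ^ (a : ℕ) * f i) ∈ shiftSpan f n K := by
  have expansion : C q * (X ^ (a : ℕ) * f i) =
      ∑ b : Fin (K + 1), q.coeff b • shifts f n K (i, a, b) := by
    have q_mem : q ∈ degreeLT k (K + 1) :=
      mem_degreeLT.2 (degree_le_natDegree.trans_lt (by exact_mod_cast Nat.lt_succ_of_le hq))
    conv_lhs => rw [← sum_C_coeff_mul_X_pow_eq q_mem]
    rw [map_sum, Finset.sum_mul]
    refine Finset.sum_congr rfl fun b _ => ?_
    rw [← C_C_mul_eq_smul, shifts, bmonomial, C_mul]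
    ring
  rw [expansion]
  exact sum_mem fun b _ => Submodule.smul_mem _ _ (Submodule.subset_span ⟨_, rfl⟩)

section BaseChange

variable {k' : Type*} [CommRing k'] (ρ : k →+* k')

theorem IsYRegular.map (hf : IsYRegular f n d i₀ c) :
    IsYRegular (bivMap ρ ∘ f) n d i₀ (ρ c) where
  natDegree_le i := natDegree_map_le.trans (hf.natDegree_le i)
  natDegree_coeff_le i a := by
    simpa [bivMap] using natDegree_map_le.trans (hf.natDegree_coeff_le i a)
  coeff_eq := by simp [bivMap, hf.coeff_eq]

theorem bivMapₛₗ_comp_shifts (f : ι → Biv k) (n K : ℕ) :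
    bivMapₛₗ ρ ∘ shifts f n K = shifts (bivMap ρ ∘ f) n K := by
  funext γ
  exact (map_mul (bivMap ρ) _ _).trans (by rw [bivMap_bmonomial]; rfl)

end BaseChange

variable {F : Type*} [Field F] [Fintype ι] {f : ι → Biv F} {c : F} {P : F[X]}

theorem IsYRegular.exists_forall_mem_shiftSpan (hf : IsYRegular f n d i₀ c) (hc : c ≠ 0)
    (hn : 0 < n) (hP : P ≠ 0) (hPf : C P ∈ Ideal.span (Set.range f)) :
    ∃ Δ : F[X], Δ ≠ 0 ∧ C Δ ∈ Ideal.span (Set.range f) ∧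
      ∀ v ∈ Ideal.span (Set.range f), v ∈ degreeLT F[X] (2 * n) →
        (∀ a, (v.coeff a).natDegree ≤ Δ.natDegree) →
          v ∈ shiftSpan f n ((Fintype.card ι * n - 1) * d) := by
  have hlead : IsUnit ((f i₀).coeff n) := by
    rw [hf.coeff_eq]
    exact isUnit_C.2 hc.isUnit
  have entry_le (r j) : (shiftMatrix f n r j).natDegree ≤ d := by
    rw [shiftMatrix, Matrix.of_apply, coeff_X_pow_mul']
    split_ifs
    exacts [hf.natDegree_coeff_le _ _, by simp]
  obtain ⟨φ, hφ⟩ := exists_det_submatrix_shiftMatrix_ne_zero hf.natDegree_le hlead hP hPf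
  refine ⟨_, hφ, C_det_submatrix_shiftMatrix_mem hn hf.natDegree_le φ, fun v hv hvn hvd => ?_⟩
  obtain ⟨u, hu⟩ := exists_shiftMatrix_mulVec_eq hf.natDegree_le hlead hv hvn
  obtain ⟨u', hu', u'_le⟩ := exists_mulVec_eq_natDegree_le entry_le hφ (u := u)
    fun r => by rw [hu]; exact hvd r
  rw [← (shiftMatrix_mulVec_eq_iff hf.natDegree_le hvn).1 (hu'.trans hu)]
  refine sum_mem fun j _ => C_mul_X_pow_mul_mem_shiftSpan ?_ j.1 j.2
  simpa using u'_le j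

theorem IsYRegular.mem_shiftSpan_of_forall_le (hf : IsYRegular f n d i₀ c) (hc : c ≠ 0)
    (hn : 0 < n) (hP : P ≠ 0) (hPf : C P ∈ Ideal.span (Set.range f)) {M : ℕ}
    (hM : ∀ q : F[X], q ≠ 0 → C q ∈ shiftSpan f n ((Fintype.card ι * n - 1) * d) →
      M ≤ q.natDegree)
    {v : Biv F} (hv : v ∈ Ideal.span (Set.range f)) (hvM : ∀ m, occursIn v m → m ≤ (n, M)) :
    v ∈ shiftSpan f n ((Fintype.card ι * n - 1) * d) := by
  obtain ⟨Δ, Δ_ne, CΔ_mem, mem_of⟩ := hf.exists_forall_mem_shiftSpan hc hn hP hPf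
  have M_le : M ≤ Δ.natDegree := by
    refine hM Δ Δ_ne (mem_of _ CΔ_mem (mem_degreeLT.2 ?_) fun a => ?_)
    · exact degree_C_le.trans_lt (by exact_mod_cast (by omega : 0 < 2 * n))
    · rw [coeff_C]
      split_ifs <;> simp
  refine mem_of v hv (mem_degreeLT.2 ((degree_lt_iff_coeff_zero _ _).2 fun a ha => ?_)) fun a => ?_
  · ext b
    by_contra hne
    have := (hvM (a, b) hne).1
    simp only at this
    omega
  · refine (natDegree_le_iff_coeff_eq_zero.2 fun b hb => ?_).trans M_le
    by_contra hne
    exact hb.not_ge (hvM (a, b) hne).2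

end Shifts

section ReducedGroebnerBases

variable {s : ℕ} {g : Fin (s + 1) → Biv k} {I : Ideal (Biv k)}

theorem IsReducedGB.mem (hg : IsReducedGB g I) (j : Fin (s + 1)) : g j ∈ I :=
  (hg.1.1 _ (List.mem_ofFn.2 ⟨j, rfl⟩)).2

theorem IsReducedGB.lexMonic (hg : IsReducedGB g I) (j : Fin (s + 1)) : lexMonic (g j) := hg.2.1 j

theorem IsReducedGB.lmon_mem_leadIdeal (hg : IsReducedGB g I) {f : Biv k} (hf : f ∈ I)
    (hf0 : f ≠ 0) : lmon f ∈ leadIdeal g := by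
  obtain ⟨_, hmem, hle⟩ := hg.1.2 f hf hf0
  obtain ⟨j, rfl⟩ := List.mem_ofFn.1 hmem
  exact mem_leadIdeal.2 ⟨j, hle⟩

theorem IsReducedGB.eq_of_occursIn_of_lmon_le (hg : IsReducedGB g I) {j l : Fin (s + 1)}
    {m : ℕ × ℕ} (hm : occursIn (g j) m) (hl : lmon (g l) ≤ m) : j = l := by
  by_contra hne
  exact hg.2.2.1 j l hne m hm hl

theorem IsReducedGB.eq_lmon_of_occursIn (hg : IsReducedGB g I) {j : Fin (s + 1)} {m : ℕ × ℕ}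
    (hm : occursIn (g j) m) (hmem : m ∈ leadIdeal g) : m = lmon (g j) := by
  obtain ⟨l, hl⟩ := mem_leadIdeal.1 hmem
  obtain rfl := hg.eq_of_occursIn_of_lmon_le hm hl
  exact toLex.injective (hm.toLex_le.antisymm (Prod.Lex.toLex_mono hl))

theorem IsReducedGB.le_of_occursIn (hg : IsReducedGB g I) {a b : ℕ} (ha : (a, 0) ∈ leadIdeal g)
    (hb : (0, b) ∈ leadIdeal g) {j : Fin (s + 1)} {m : ℕ × ℕ} (hm : occursIn (g j) m) :
    m ≤ (a, b) := by
  constructor <;> by_contra! hlt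
  · have le_m : (a, 0) ≤ m := ⟨hlt.le, Nat.zero_le _⟩
    obtain ⟨l, hl⟩ := mem_leadIdeal.1 ha
    obtain rfl := hg.eq_of_occursIn_of_lmon_le hm (hl.trans le_m)
    have m_eq := hg.eq_lmon_of_occursIn hm ((leadIdeal g).upper le_m ha)
    exact hlt.not_ge (m_eq ▸ hl.1)
  · have le_m : (0, b) ≤ m := ⟨Nat.zero_le _, hlt.le⟩
    obtain ⟨l, hl⟩ := mem_leadIdeal.1 hb
    obtain rfl := hg.eq_of_occursIn_of_lmon_le hm (hl.trans le_m)
    have m_eq := hg.eq_lmon_of_occursIn hm ((leadIdeal g).upper le_m hb)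
    exact hlt.not_ge (m_eq ▸ hl.2)

theorem IsReducedGB.eq_one [Nontrivial k] (hg : IsReducedGB g I)
    (h0 : (0, 0) ∈ leadIdeal g) (j : Fin (s + 1)) : g j = 1 := by
  have lmon_le := hg.le_of_occursIn h0 h0 (occursIn_lmon (hg.lexMonic j).ne_zero)
  have natDegree_eq : (g j).natDegree = 0 := Nat.le_zero.1 lmon_le.1
  exact eq_one_of_monic_natDegree_zero
    (eq_one_of_monic_natDegree_zero (hg.lexMonic j) (Nat.le_zero.1 lmon_le.2)) natDegree_eq

theorem IsReducedGB.bcoeff_eq_ite (hg : IsReducedGB g I) (j : Fin (s + 1))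
    {m : ℕ × ℕ} (hm : m ∈ leadIdeal g) :
    bcoeff m (g j) = if m = lmon (g j) then 1 else 0 := by
  split_ifs with m_eq
  · rw [m_eq, lexMonic_iff.1 (hg.lexMonic j)]
  · exact not_not.1 fun hocc => m_eq (hg.eq_lmon_of_occursIn hocc hm)

theorem exists_C_mem_of_mem_leadIdeal [Nontrivial k] {κ : Type*} {G : κ → Biv k}
    (hG : ∀ j, lexMonic (G j)) (hGI : ∀ j, G j ∈ I) {b : ℕ} (hb : (0, b) ∈ leadIdeal G) :
    ∃ P : k[X], P ≠ 0 ∧ C P ∈ I := by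
  obtain ⟨j, hj⟩ := mem_leadIdeal.1 hb
  have eq_C : G j = C ((G j).coeff 0) := eq_C_of_natDegree_eq_zero (Nat.le_zero.1 hj.1)
  refine ⟨(G j).coeff 0, fun h0 => (hG j).ne_zero (by rw [eq_C, h0, C_0]), ?_⟩
  rw [← eq_C]
  exact hGI j

theorem exists_C_mem_of_finiteDimensional {F : Type*} [Field F] (I : Ideal (Biv F))
    [FiniteDimensional F (Biv F ⧸ I)] : ∃ P : F[X], P ≠ 0 ∧ C P ∈ I := by
  let x : Biv F ⧸ I := Ideal.Quotient.mk I (C X)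
  obtain ⟨P, P_monic, P_root⟩ : IsIntegral F x := Algebra.IsIntegral.isIntegral x
  refine ⟨P, P_monic.ne_zero, Ideal.Quotient.eq_zero_iff_mem.1 ?_⟩
  rw [← P_root]
  conv_lhs => rw [← eval₂_C_X (p := P), hom_eval₂, hom_eval₂]
  rfl

theorem IsReducedGB.exists_min_mem_leadIdeal {F : Type*} [Field F]
    {g : Fin (s + 1) → Biv F} {I : Ideal (Biv F)} [FiniteDimensional F (Biv F ⧸ I)]
    (hg : IsReducedGB g I) :
    ∃ M, (0, M) ∈ leadIdeal g ∧ ∀ b, (0, b) ∈ leadIdeal g → M ≤ b := by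
  classical
  obtain ⟨P, P_ne, CP_mem⟩ := exists_C_mem_of_finiteDimensional I
  have nonempty : ∃ b, (0, b) ∈ leadIdeal g :=
    ⟨P.natDegree, lmon_C P ▸ hg.lmon_mem_leadIdeal CP_mem (C_ne_zero.2 P_ne)⟩
  exact ⟨Nat.find nonempty, Nat.find_spec nonempty, fun b hb => Nat.find_le hb⟩

theorem IsReducedGB.of_lmon_eq [Nontrivial k] {k₀ : Type*} [CommRing k₀]
    {g : Fin (s + 1) → Biv k₀} {I : Ideal (Biv k₀)} (hg : IsReducedGB g I)
    {G : Fin (s + 1) → Biv k} {J : Ideal (Biv k)} (hlmon : ∀ j, lmon (G j) = lmon (g j))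
    (hmonic : ∀ j, _root_.lexMonic (G j)) (hocc : ∀ j m, occursIn (G j) m → occursIn (g j) m)
    (hGJ : ∀ j, G j ∈ J)
    (hJ : ∀ r ∈ J, (∀ m, occursIn r m → m ∉ leadIdeal g) → r = 0) : IsReducedGB G J := by
  have leadIdeal_eq : leadIdeal G = leadIdeal g := by simp only [leadIdeal, hlmon]
  refine ⟨⟨?_, fun f hfJ hf0 => ?_⟩, hmonic, fun j l hjl m hm => ?_, fun j l hjl => ?_⟩
  · intro _ hmem
    obtain ⟨j, rfl⟩ := List.mem_ofFn.1 hmem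
    exact ⟨(hmonic j).ne_zero, hGJ j⟩
  · have lmon_mem : lmon f ∈ leadIdeal G := by
      by_contra hnot
      obtain ⟨r, hrJ, hr0, hr⟩ :=
        exists_mem_ne_zero_forall_notMem_leadIdeal hmonic hGJ hfJ hf0 hnot
      exact hr0 (hJ r hrJ (leadIdeal_eq ▸ hr))
    obtain ⟨j, hj⟩ := mem_leadIdeal.1 lmon_mem
    exact ⟨G j, List.mem_ofFn.2 ⟨j, rfl⟩, hj⟩
  · rw [hlmon]
    exact hg.2.2.1 j l hjl m (hocc j m hm)
  · rw [hlmon, hlmon]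
    exact hg.2.2.2 j l hjl

end ReducedGroebnerBases

section Reduction

variable {K F : Type*} [CommRing K] [Field F] {ρ : k →+* K}

/-- The image in `F[x, y]` of the polynomial with numerator `q` and denominator `β`. -/
def reduction (τ : k →+* F) (β : k) (q : Biv k) : Biv F := C (C (τ β)⁻¹) * bivMap τ q

theorem reduction_C_C_mul {τ : k →+* F} {c : k} (hc : τ c ≠ 0) (D : k)
    (q : Biv k) : reduction τ (c * D) (C (C c) * q) = reduction τ D q := by
  have bivMap_C_C : bivMap τ (C (C c)) = C (C (τ c)) := by simp [bivMap]
  rw [reduction, reduction, map_mul τ, map_mul (bivMap τ), bivMap_C_C, ← mul_assoc, ← C_mul,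
    ← C_mul, mul_inv_rev, inv_mul_cancel_right₀ hc]

variable (τ : k →+* F) {β : k} {q : Biv k} {g : Biv K}

theorem bcoeff_reduction (m : ℕ × ℕ) : bcoeff m (reduction τ β q) = (τ β)⁻¹ * τ (bcoeff m q) := by
  rw [reduction, C_C_mul_eq_smul, map_smul, bcoeff_bivMap, smul_eq_mul]

theorem apply_bcoeff_eq_mul (hq : bivMap ρ q = C (C (ρ β)) * g) (m : ℕ × ℕ) :
    ρ (bcoeff m q) = ρ β * bcoeff m g := by
  rw [← bcoeff_bivMap, hq, C_C_mul_eq_smul, map_smul, smul_eq_mul]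

theorem occursIn_of_occursIn_reduction (hρ : Function.Injective ρ)
    (hq : bivMap ρ q = C (C (ρ β)) * g) {m : ℕ × ℕ} (hm : occursIn (reduction τ β q) m) :
    occursIn g m := by
  intro h0
  have numerator_eq_zero : bcoeff m q = 0 := by
    rw [← map_eq_zero_iff ρ hρ, apply_bcoeff_eq_mul hq, bcoeff_apply, h0, mul_zero]
  exact hm ((bcoeff_reduction τ m).trans (by simp [numerator_eq_zero]))

theorem bcoeff_lmon_reduction (hρ : Function.Injective ρ) (hq : bivMap ρ q = C (C (ρ β)) * g)
    (hg : lexMonic g) (hβ : τ β ≠ 0) : bcoeff (lmon g) (reduction τ β q) = 1 := by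
  have numerator_eq : bcoeff (lmon g) q = β :=
    hρ (by rw [apply_bcoeff_eq_mul hq, lexMonic_iff.1 hg, mul_one])
  rw [bcoeff_reduction, numerator_eq, inv_mul_cancel₀ hβ]

theorem lmon_reduction (hρ : Function.Injective ρ) (hq : bivMap ρ q = C (C (ρ β)) * g)
    (hg : lexMonic g) (hβ : τ β ≠ 0) : lmon (reduction τ β q) = lmon g :=
  lmon_eq_of_forall_toLex_le
    (occursIn_iff.2 (by simp [bcoeff_lmon_reduction τ hρ hq hg hβ]))
    fun _ hm => (occursIn_of_occursIn_reduction τ hρ hq hm).toLex_le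

theorem lexMonic_reduction (hρ : Function.Injective ρ) (hq : bivMap ρ q = C (C (ρ β)) * g)
    (hg : lexMonic g) (hβ : τ β ≠ 0) : lexMonic (reduction τ β q) := by
  rw [lexMonic_iff, lmon_reduction τ hρ hq hg hβ, bcoeff_lmon_reduction τ hρ hq hg hβ]

theorem IsReducedGB.reduction {s : ℕ} {g : Fin (s + 1) → Biv K} {I : Ideal (Biv K)}
    (hg : IsReducedGB g I) (hρ : Function.Injective ρ) {q : Fin (s + 1) → Biv k}
    (hq : ∀ j, bivMap ρ (q j) = C (C (ρ β)) * g j) (hβ : τ β ≠ 0) {J : Ideal (Biv F)}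
    (hqJ : ∀ j, bivMap τ (q j) ∈ J)
    (hJ : ∀ r ∈ J, (∀ m, occursIn r m → m ∉ leadIdeal g) → r = 0) :
    IsReducedGB (fun j => _root_.reduction τ β (q j)) J :=
  hg.of_lmon_eq (fun j => lmon_reduction τ hρ (hq j) (hg.lexMonic j) hβ)
    (fun j => lexMonic_reduction τ hρ (hq j) (hg.lexMonic j) hβ)
    (fun j _ => occursIn_of_occursIn_reduction τ hρ (hq j))
    (fun j => J.mul_mem_left _ (hqJ j)) hJ

end Reduction

section Bounds

theorem abs_det_le_factorial_mul_pow {m : Type*} [Fintype m] [DecidableEq m] {A : Matrix m m ℤ}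
    {H : ℝ} (hA : ∀ i j, |(A i j : ℝ)| ≤ H) :
    |(A.det : ℝ)| ≤ (Fintype.card m).factorial * H ^ Fintype.card m := by
  have det_le := Matrix.det_le (A := (Int.castRingHom ℝ).mapMatrix A) (abv := AbsoluteValue.abs)
    (x := H) fun i j => hA i j
  rwa [← RingHom.map_det, nsmul_eq_mul] at det_le

variable {n d r : ℕ} {h : ℝ}

theorem sq_mul_sub_mul_add_eq (n d : ℕ) : n ^ 2 * d - n * d + n = n * ((n - 1) * d + 1) := by
  rw [sq, mul_assoc, ← Nat.mul_sub, mul_add, mul_one, Nat.sub_mul, one_mul]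

theorem factorial_le_exp_mul_log {N : ℕ} (hr : r ≤ N) :
    (r.factorial : ℝ) ≤ Real.exp (N * Real.log N) := by
  rcases N.eq_zero_or_pos with rfl | hN
  · simp [Nat.le_zero.1 hr]
  · calc (r.factorial : ℝ) ≤ (N : ℝ) ^ N := by
          exact_mod_cast (Nat.factorial_le hr).trans N.factorial_le_pow
      _ = Real.exp (N * Real.log N) := by
          rw [Real.exp_nat_mul, Real.exp_log (by exact_mod_cast hN)]

theorem log_natCast_mul_natCast_add_one_nonneg (n d : ℕ) :
    0 ≤ Real.log ((n : ℝ) * ((d : ℝ) + 1)) := by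
  exact_mod_cast Real.log_natCast_nonneg (n * (d + 1))

theorem factorial_mul_exp_pow_le_exp_Bfun (hh : 0 ≤ h) (hr : r ≤ n * ((n - 1) * d + 1)) :
    r.factorial * Real.exp h ^ r ≤ Real.exp (Bfun n d h) := by
  rw [← sq_mul_sub_mul_add_eq] at hr
  unfold Bfun
  set N := n ^ 2 * d - n * d + n
  have pow_le : Real.exp h ^ r ≤ Real.exp (N * h) := by
    rw [← Real.exp_nat_mul]
    gcongr
  calc r.factorial * Real.exp h ^ r ≤ Real.exp (N * Real.log N) * Real.exp (N * h) := by
        gcongr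
        exact factorial_le_exp_mul_log hr
    _ = Real.exp (N * Real.log N + N * h) := (Real.exp_add _ _).symm
    _ ≤ _ := Real.exp_le_exp.2 (by linarith [log_natCast_mul_natCast_add_one_nonneg n d])

theorem exp_mul_exp_Bfun_le_exp_Cfun (t d D : ℕ) (h : ℝ) :
    Real.exp h * Real.exp (Bfun (t * D) d h) ≤ Real.exp (Cfun t d D h) := by
  rw [← Real.exp_add, Real.exp_le_exp, Cfun]
  linarith [Real.log_nonneg one_le_two]

theorem natDegree_coeff_le_totDeg (f : Biv k) (a : ℕ) : (f.coeff a).natDegree ≤ totDeg f := by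
  rcases eq_or_ne (f.coeff a) 0 with h0 | h0
  · simp [h0]
  · exact (Nat.le_add_left _ a).trans
      (Finset.le_sup (f := fun j => j + (f.coeff j).natDegree) (mem_support_iff.2 h0))

end Bounds

section Pivots

variable {σ : Type*} {π : σ → ℕ × ℕ} {L : UpperSet (ℕ × ℕ)} {M : ℕ}

theorem IsSeparating.le_natDegree_of_C_mem {W : Submodule k (Biv k)}
    (hW : IsSeparating (fun s => bcoeff (π s)) W) (hπ : ∀ s, π s ∈ L)
    (hM : ∀ b, (0, b) ∈ L → M ≤ b) {q : k[X]} (hq : q ≠ 0) (hqW : C q ∈ W) :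
    M ≤ q.natDegree := by
  obtain ⟨s, hs⟩ : ∃ s, bcoeff (π s) (C q) ≠ 0 := by
    by_contra! h0
    exact hq (C_eq_zero.1 (hW _ hqW h0))
  rw [bcoeff_apply, coeff_C] at hs
  split_ifs at hs with fst_eq
  · have pivot_mem : (0, (π s).2) ∈ L := fst_eq ▸ hπ s
    exact (hM _ pivot_mem).trans (le_natDegree_of_ne_zero hs)
  · exact absurd (coeff_zero _) hs

theorem le_of_notMem_upperSet {n : ℕ} (hn : (n, 0) ∈ L) (hM : (0, M) ∈ L) {m : ℕ × ℕ}
    (hm : m ∉ L) : m ≤ (n, M) := by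
  constructor <;> by_contra! hlt
  · exact hm (L.upper (show (n, 0) ≤ m from ⟨hlt.le, Nat.zero_le _⟩) hn)
  · exact hm (L.upper (show (0, M) ≤ m from ⟨Nat.zero_le _, hlt.le⟩) hM)

theorem eq_zero_of_forall_notMem_of_zero_mem (hL : (0, 0) ∈ L) {r : Biv k}
    (hr : ∀ m, occursIn r m → m ∉ L) : r = 0 :=
  bcoeff_ext fun m => not_not.1 fun hm => hr m hm (L.upper (zero_le (a := m)) hL)

variable {ι F : Type*} [Fintype ι] [Field F] {f : ι → Biv F} {n d : ℕ} {i₀ : ι} {c : F}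

theorem IsYRegular.eq_zero_of_forall_notMem (hf : IsYRegular f n d i₀ c) (hc : c ≠ 0)
    (hn : 0 < n) {P : F[X]} (hP : P ≠ 0) (hPf : C P ∈ Ideal.span (Set.range f))
    (hnL : (n, 0) ∈ L) (hML : (0, M) ∈ L) (hM : ∀ b, (0, b) ∈ L → M ≤ b) (hπ : ∀ s, π s ∈ L)
    (hsep : IsSeparating (fun s => bcoeff (π s))
      (shiftSpan f n ((Fintype.card ι * n - 1) * d)))
    {r : Biv F} (hr : r ∈ Ideal.span (Set.range f)) (hrL : ∀ m, occursIn r m → m ∉ L) :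
    r = 0 := by
  have r_mem : r ∈ shiftSpan f n ((Fintype.card ι * n - 1) * d) :=
    hf.mem_shiftSpan_of_forall_le hc hn hP hPf
      (fun _ hq hqW => hsep.le_natDegree_of_C_mem hπ hM hq hqW) hr
      fun m hm => le_of_notMem_upperSet hnL hML (hrL m hm)
  exact hsep r r_mem fun s => not_not.1 fun hs => hrL (π s) hs (hπ s)

end Pivots

section PivotMatrix

variable {σ ι K : Type*} [CommRing K] {n e : ℕ}

theorem IsSeparating.of_shiftSpan_bivMap {f : ι → Biv k} {π : σ → ℕ × ℕ} {ρ : k →+* K}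
    (hρ : Function.Injective ρ)
    (hsep : IsSeparating (fun s => bcoeff (π s)) (shiftSpan (bivMap ρ ∘ f) n e)) :
    IsSeparating (fun s => bcoeff (π s)) (shiftSpan f n e) := by
  rw [shiftSpan, ← bivMapₛₗ_comp_shifts] at hsep
  exact IsSeparating.of_injective (fun s => bcoeff_bivMap ρ (π s)) (bivMap_injective hρ) hsep

/-- The coefficients at the pivot monomials `π` (rows) of the shifts of `f` selected by `φ`
(columns). -/
def pivotMatrix (f : ι → Biv k) (π : σ → ℕ × ℕ) (φ : σ → ι × Fin n × Fin (e + 1)) :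
    Matrix σ σ k :=
  evalMatrix (fun s => bcoeff (π s)) (shifts f n e ∘ φ)

variable [Fintype σ] [DecidableEq σ]

/-- The Cramer numerator of `pivotMatrix f π φ` at the pivot `s`: a combination of shifts of `f`
whose coefficient is `det (pivotMatrix f π φ)` at `π s` and zero at the other pivots. -/
def pivotNumerator (f : ι → Biv k) (π : σ → ℕ × ℕ) (φ : σ → ι × Fin n × Fin (e + 1)) (s : σ) :
    Biv k :=
  cramerNumerator (fun s => bcoeff (π s)) (shifts f n e ∘ φ) s

variable (f : ι → Biv k) (π : σ → ℕ × ℕ) (φ : σ → ι × Fin n × Fin (e + 1))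

theorem pivotNumerator_mem_ideal (s : σ) : pivotNumerator f π φ s ∈ Ideal.span (Set.range f) :=
  shiftSpan_le_ideal (n := n) (K := e)
    (sum_mem fun s' _ => Submodule.smul_mem _ _ (Submodule.subset_span ⟨φ s', rfl⟩))

theorem det_pivotMatrix_bivMap (ρ : k →+* K) :
    (pivotMatrix (bivMap ρ ∘ f) π φ).det = ρ (pivotMatrix f π φ).det := by
  rw [RingHom.map_det, pivotMatrix, pivotMatrix, ← bivMapₛₗ_comp_shifts, Function.comp_assoc,
    evalMatrix_comp fun s => bcoeff_bivMap ρ (π s)]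

theorem bivMap_pivotNumerator (ρ : k →+* K) (s : σ) :
    bivMap ρ (pivotNumerator f π φ s) = pivotNumerator (bivMap ρ ∘ f) π φ s := by
  rw [pivotNumerator, pivotNumerator, ← bivMapₛₗ_comp_shifts, Function.comp_assoc,
    ← map_cramerNumerator fun s => bcoeff_bivMap ρ (π s)]
  rfl

variable {f π φ}

theorem IsSeparating.shiftSpan_bivMap [IsDomain K] {τ : k →+* K}
    (hsep : IsSeparating (fun s => bcoeff (π s)) (shiftSpan f n e))
    (hdet : τ (pivotMatrix f π φ).det ≠ 0) :
    IsSeparating (fun s => bcoeff (π s)) (shiftSpan (bivMap τ ∘ f) n e) := by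
  rw [shiftSpan, ← bivMapₛₗ_comp_shifts]
  exact hsep.comp_of_det_ne_zero (fun s => bcoeff_bivMap τ (π s)) hdet

end PivotMatrix

section PivotSystems

variable {σ ι : Type*} {s n d e : ℕ} {f : ι → Biv k} {g : Fin (s + 1) → Biv k}

theorem IsReducedGB.mem_leadIdeal_of_mem_leadMonomials
    (hg : IsReducedGB g (Ideal.span (Set.range f)))
    (μ : leadMonomials (shiftSpan f n e)) : ofLex μ.1 ∈ leadIdeal g := by
  obtain ⟨w, hw, hw0, lmon_eq⟩ := μ.2
  rw [← lmon_eq]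
  exact hg.lmon_mem_leadIdeal (shiftSpan_le_ideal hw) hw0

theorem IsYRegular.mem_leadIdeal {i₀ : ι} {c : k} (hf : IsYRegular f n d i₀ c)
    (hc : c ≠ 0) (hg : IsReducedGB g (Ideal.span (Set.range f))) : (n, 0) ∈ leadIdeal g :=
  hf.lmon_eq hc ▸ hg.lmon_mem_leadIdeal (Ideal.subset_span ⟨i₀, rfl⟩) (hf.ne_zero hc)

variable [Fintype σ] [DecidableEq σ]

theorem IsReducedGB.pivotNumerator_eq {I : Ideal (Biv k)} (hg : IsReducedGB g I)
    {π : σ → ℕ × ℕ} (hπ : Function.Injective π) (hπg : ∀ s, π s ∈ leadIdeal g)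
    (hsep : IsSeparating (fun s => bcoeff (π s)) (shiftSpan f n e))
    (φ : σ → ι × Fin n × Fin (e + 1)) {j : Fin (s + 1)} (hgj : g j ∈ shiftSpan f n e)
    {μ : σ} (hμ : π μ = lmon (g j)) :
    pivotNumerator f π φ μ = C (C (pivotMatrix f π φ).det) * g j := by
  have expansion := hsep.det_smul_eq_sum (u := shifts f n e ∘ φ)
    (fun s => Submodule.subset_span ⟨φ s, rfl⟩) hgj
  simp only [hg.bcoeff_eq_ite j (hπg _), ← hμ, hπ.eq_iff, ite_smul, one_smul, zero_smul,
    Finset.sum_ite_eq', Finset.mem_univ, if_true] at expansion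
  rw [C_C_mul_eq_smul]
  exact expansion.symm

variable {K : Type*} [Field K]

/-- The pivot monomials `π` and the shifts of `f` selected by `φ` compute the Gröbner basis `g` by
Cramer's rule: `g j` is the numerator at the pivot `μ j` divided by `det (pivotMatrix f π φ)`. The
separation condition is imposed over the base ring, so that it can be reduced along any
homomorphism that does not kill the determinant. -/
structure IsPivotSystem (ρ : k →+* K) (f : ι → Biv k) (g : Fin (s + 1) → Biv K)
    (π : σ → ℕ × ℕ) (φ : σ → ι × Fin n × Fin (e + 1)) (μ : Fin (s + 1) → σ) : Prop where
  det_ne_zero : (pivotMatrix f π φ).det ≠ 0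
  isSeparating : IsSeparating (fun s => bcoeff (π s)) (shiftSpan f n e)
  mem_leadIdeal : ∀ s, π s ∈ leadIdeal g
  map_pivotNumerator : ∀ j, bivMap ρ (pivotNumerator f π φ (μ j)) =
    C (C (ρ (pivotMatrix f π φ).det)) * g j

theorem IsReducedGB.mem_shiftSpan [Fintype ι] {f : ι → Biv K} {g : Fin (s + 1) → Biv K}
    {i₀ : ι} {c : K} [FiniteDimensional K (Biv K ⧸ Ideal.span (Set.range f))]
    (hg : IsReducedGB g (Ideal.span (Set.range f))) (hf : IsYRegular f n d i₀ c) (hc : c ≠ 0)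
    (hn : 0 < n) (j : Fin (s + 1)) : g j ∈ shiftSpan f n ((Fintype.card ι * n - 1) * d) := by
  obtain ⟨P, P_ne, CP_mem⟩ := exists_C_mem_of_finiteDimensional (Ideal.span (Set.range f))
  obtain ⟨M, M_mem, M_le⟩ := hg.exists_min_mem_leadIdeal
  exact hf.mem_shiftSpan_of_forall_le hc hn P_ne CP_mem
    (fun q hq hqW => (isSeparating_bcoeff_leadMonomials _).le_natDegree_of_C_mem
      hg.mem_leadIdeal_of_mem_leadMonomials M_le hq hqW)
    (hg.mem j) fun m hm => hg.le_of_occursIn (hf.mem_leadIdeal hc hg) M_mem hm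

variable [Fintype ι] {i₀ : ι} {c : k} {ρ : k →+* K} {g : Fin (s + 1) → Biv K}

theorem IsReducedGB.exists_isPivotSystem
    [FiniteDimensional K (Biv K ⧸ Ideal.span (Set.range (bivMap ρ ∘ f)))]
    (hg : IsReducedGB g (Ideal.span (Set.range (bivMap ρ ∘ f)))) (hρ : Function.Injective ρ)
    (hf : IsYRegular f n d i₀ c) (hc : c ≠ 0) (hn : 0 < n) :
    ∃ (σ : Type) (_ : Fintype σ) (_ : DecidableEq σ) (π : σ → ℕ × ℕ)
      (φ : σ → ι × Fin n × Fin ((Fintype.card ι * n - 1) * d + 1)) (μ : Fin (s + 1) → σ),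
      IsPivotSystem ρ f g π φ μ := by
  classical
  let W := shiftSpan (bivMap ρ ∘ f) n ((Fintype.card ι * n - 1) * d)
  let π (μ : leadMonomials W) : ℕ × ℕ := ofLex μ.1
  have π_injective : Function.Injective π := ofLex.injective.comp Subtype.val_injective
  have π_mem (μ) : π μ ∈ leadIdeal g := hg.mem_leadIdeal_of_mem_leadMonomials μ
  have separating : IsSeparating (fun μ => bcoeff (π μ)) W := isSeparating_bcoeff_leadMonomials W
  have g_mem (j) : g j ∈ W :=
    hg.mem_shiftSpan (hf.map ρ) ((map_ne_zero_iff ρ hρ).2 hc) hn j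
  let _ : Fintype (leadMonomials W) := (finite_leadMonomials_span _).fintype
  obtain ⟨φ, det_ne⟩ := exists_det_evalMatrix_leadMonomials_ne_zero (W := W) le_rfl
  let μ (j) : leadMonomials W := ⟨toLex (lmon (g j)), g j, g_mem j, (hg.lexMonic j).ne_zero, rfl⟩
  refine ⟨leadMonomials W, inferInstance, inferInstance, π, φ, μ, ?_, ?_, π_mem, fun j => ?_⟩
  · have det_map_ne : ρ (pivotMatrix f π φ).det ≠ 0 := det_pivotMatrix_bivMap f π φ ρ ▸ det_ne
    exact fun h0 => det_map_ne (by rw [h0, map_zero])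
  · exact separating.of_shiftSpan_bivMap hρ
  · rw [bivMap_pivotNumerator, ← det_pivotMatrix_bivMap]
    exact hg.pivotNumerator_eq π_injective π_mem separating φ (g_mem j) rfl

variable {F : Type*} [Field F] {τ : k →+* F} {π : σ → ℕ × ℕ}
  {φ : σ → ι × Fin n × Fin ((Fintype.card ι * n - 1) * d + 1)} {μ : Fin (s + 1) → σ}
  [FiniteDimensional K (Biv K ⧸ Ideal.span (Set.range (bivMap ρ ∘ f)))]

theorem IsPivotSystem.isReducedGB_reduction (hπ : IsPivotSystem ρ f g π φ μ)
    (hg : IsReducedGB g (Ideal.span (Set.range (bivMap ρ ∘ f)))) (hρ : Function.Injective ρ)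
    (hf : IsYRegular f n d i₀ c) (hn : 0 < n) (hc : τ c ≠ 0)
    (hdet : τ (pivotMatrix f π φ).det ≠ 0) :
    IsReducedGB (fun j => reduction τ (pivotMatrix f π φ).det (pivotNumerator f π φ (μ j)))
      (Ideal.span (Set.range (bivMap τ ∘ f))) := by
  have numerator_mem (j) : bivMap τ (pivotNumerator f π φ (μ j)) ∈
      Ideal.span (Set.range (bivMap τ ∘ f)) := by
    rw [bivMap_pivotNumerator]
    exact pivotNumerator_mem_ideal _ _ _ _
  obtain ⟨M, M_mem, M_le⟩ := hg.exists_min_mem_leadIdeal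
  obtain ⟨P, P_ne, CP_mem⟩ : ∃ P : F[X], P ≠ 0 ∧ C P ∈ Ideal.span (Set.range (bivMap τ ∘ f)) := by
    refine exists_C_mem_of_mem_leadIdeal (b := M)
      (fun j => lexMonic_reduction τ hρ (hπ.map_pivotNumerator j) (hg.lexMonic j) hdet)
      (fun j => Ideal.mul_mem_left _ _ (numerator_mem j)) ?_
    simpa only [leadIdeal,
      lmon_reduction τ hρ (hπ.map_pivotNumerator _) (hg.lexMonic _) hdet] using M_mem
  have n_mem : (n, 0) ∈ leadIdeal g :=
    (hf.map ρ).mem_leadIdeal ((map_ne_zero_iff ρ hρ).2 (ne_zero_of_map hc)) hg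
  exact hg.reduction τ hρ hπ.map_pivotNumerator hdet numerator_mem fun r =>
    (hf.map τ).eq_zero_of_forall_notMem hc hn P_ne CP_mem n_mem M_mem M_le hπ.mem_leadIdeal
      (hπ.isSeparating.shiftSpan_bivMap hdet)

end PivotSystems

section PivotBounds

variable {σ ι : Type*} [Fintype σ] [DecidableEq σ] {f : ι → Biv ℤ} {n e : ℕ} {H : ℝ}

theorem IsYRegular.abs_le {d : ℕ} {i₀ : ι} {c : ℤ} (hf : IsYRegular f n d i₀ c)
    (hfH : ∀ i m, |((bcoeff m (f i) : ℤ) : ℝ)| ≤ H) : |(c : ℝ)| ≤ H := by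
  simpa [bcoeff_apply, hf.coeff_eq] using hfH i₀ (n, 0)

theorem abs_bcoeff_shifts_le (hf : ∀ i m, |((bcoeff m (f i) : ℤ) : ℝ)| ≤ H)
    (γ : ι × Fin n × Fin (e + 1)) (m : ℕ × ℕ) :
    |((bcoeff m (shifts f n e γ) : ℤ) : ℝ)| ≤ H := by
  rw [shifts, bcoeff_bmonomial_mul]
  split_ifs
  · exact hf _ _
  · simpa using (abs_nonneg _).trans (hf γ.1 0)

variable {π : σ → ℕ × ℕ} {φ : σ → ι × Fin n × Fin (e + 1)}

theorem abs_det_pivotMatrix_le (hf : ∀ i m, |((bcoeff m (f i) : ℤ) : ℝ)| ≤ H) :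
    |((pivotMatrix f π φ).det : ℝ)| ≤ (Fintype.card σ).factorial * H ^ Fintype.card σ :=
  abs_det_le_factorial_mul_pow fun _ _ => abs_bcoeff_shifts_le hf _ _

theorem abs_bcoeff_pivotNumerator_le (hf : ∀ i m, |((bcoeff m (f i) : ℤ) : ℝ)| ≤ H)
    (s : σ) (m : ℕ × ℕ) :
    |((bcoeff m (pivotNumerator f π φ s) : ℤ) : ℝ)| ≤
      (Fintype.card σ).factorial * H ^ Fintype.card σ := by
  rw [pivotNumerator, apply_cramerNumerator]
  refine abs_det_le_factorial_mul_pow fun s' s'' => ?_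
  rw [Matrix.updateRow_apply]
  split_ifs <;> exact abs_bcoeff_shifts_le hf _ _

theorem card_le_of_det_pivotMatrix_ne_zero [Fintype ι] (hdet : (pivotMatrix f π φ).det ≠ 0) :
    Fintype.card σ ≤ Fintype.card ι * n * (e + 1) := by
  have φ_injective : Function.Injective φ :=
    injective_of_det_submatrix_ne_zero
      (A := .of fun s γ => bcoeff (π s) (shifts f n e γ)) hdet
  simpa [mul_assoc] using Fintype.card_le_of_injective φ φ_injective

end PivotBounds

section HeightBound

variable {ι K : Type*} [Fintype ι] [Field K] [CharZero K] {f : ι → Biv ℤ} {s n d : ℕ} {h : ℝ}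
  {g : Fin (s + 1) → Biv K}
  [FiniteDimensional K (Biv K ⧸ Ideal.span (Set.range (bivMap (Int.castRingHom K) ∘ f)))]

theorem IsReducedGB.exists_numerators
    (hg : IsReducedGB g (Ideal.span (Set.range (bivMap (Int.castRingHom K) ∘ f))))
    {i₀ : ι} {c : ℤ} (hf : IsYRegular f n d i₀ c) (hc : c ≠ 0)
    (hfh : ∀ i m, |((bcoeff m (f i) : ℤ) : ℝ)| ≤ Real.exp h) :
    ∃ (D : ℤ) (q : Fin (s + 1) → Biv ℤ), D ≠ 0 ∧
      (∀ j, bivMap (Int.castRingHom K) (q j) = C (C (D : K)) * g j) ∧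
      |(D : ℝ)| ≤ Real.exp (Bfun (Fintype.card ι * n) d h) ∧
      (∀ j m, |((bcoeff m (q j) : ℤ) : ℝ)| ≤ Real.exp (Bfun (Fintype.card ι * n) d h)) ∧
      ∀ {F : Type*} [Field F] (τ : ℤ →+* F), τ c ≠ 0 → τ D ≠ 0 →
        IsReducedGB (fun j => _root_.reduction τ D (q j))
          (Ideal.span (Set.range (bivMap τ ∘ f))) := by
  have hρ : Function.Injective (Int.castRingHom K) := Int.cast_injective
  rcases n.eq_zero_or_pos with rfl | hn
  · have zero_mem : (0, 0) ∈ leadIdeal g :=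
      (hf.map _).mem_leadIdeal ((map_ne_zero_iff _ hρ).2 hc) hg
    have Bfun_eq : Bfun (Fintype.card ι * 0) d h = h := by simp [Bfun]
    have map_eq (j) : bivMap (Int.castRingHom K) (f i₀) = C (C (c : K)) * g j := by
      simp [hf.eq_C_C, bivMap, hg.eq_one zero_mem j]
    rw [Bfun_eq]
    refine ⟨c, fun _ => f i₀, hc, map_eq, hf.abs_le hfh, fun _ => hfh i₀, fun τ hτc _ => ?_⟩
    exact hg.reduction τ hρ map_eq hτc (fun _ => Ideal.subset_span ⟨i₀, rfl⟩)
      fun r _ => eq_zero_of_forall_notMem_of_zero_mem zero_mem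
  · obtain ⟨σ, _, _, π, φ, μ, hπ⟩ := hg.exists_isPivotSystem hρ hf hc hn
    have h_nonneg : 0 ≤ h := by
      rw [← Real.one_le_exp_iff]
      exact le_trans (by exact_mod_cast Int.one_le_abs hc) (hf.abs_le hfh)
    have le_exp := factorial_mul_exp_pow_le_exp_Bfun h_nonneg
      (card_le_of_det_pivotMatrix_ne_zero hπ.det_ne_zero)
    exact ⟨(pivotMatrix f π φ).det, fun j => pivotNumerator f π φ (μ j), hπ.det_ne_zero,
      hπ.map_pivotNumerator, (abs_det_pivotMatrix_le hfh).trans le_exp,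
      fun j m => (abs_bcoeff_pivotNumerator_le hfh (μ j) m).trans le_exp,
      fun τ hτc hτD => hπ.isReducedGB_reduction hg hρ hf hn hτc hτD⟩

theorem height_bound_case1_general (hy : ∀ i, (f i).natDegree ≤ n)
    (hx : ∀ i a, ((f i).coeff a).natDegree ≤ d)
    (hh : ∀ i (a b : ℕ), ((|((f i).coeff a).coeff b| : ℤ) : ℝ) ≤ Real.exp h)
    (hlead : ∃ i, ∃ c : ℤ, c ≠ 0 ∧ (f i).coeff n = C c)
    (hg : IsReducedGB g (Ideal.span (Set.range (bivMap (Int.castRingHom K) ∘ f)))) :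
    ∃ β : ℤ, β ≠ 0 ∧ ∃ gz : Fin (s + 1) → Biv ℤ,
      (∀ j, bivMap (Int.castRingHom K) (gz j) = C (C (β : K)) * g j) ∧
      (|β| : ℝ) ≤ Real.exp (Cfun (Fintype.card ι) d (Delta1 n) h) ∧
      (∀ j (a b : ℕ), ((|((gz j).coeff a).coeff b| : ℤ) : ℝ) ≤
        Real.exp (Cfun (Fintype.card ι) d (Delta1 n) h)) ∧
      ∀ {F : Type*} [Field F], (β : F) ≠ 0 →
        IsReducedGB (fun j => C (C (β : F)⁻¹) * bivMap (Int.castRingHom F) (gz j))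
          (Ideal.span (Set.range (bivMap (Int.castRingHom F) ∘ f))) := by
  obtain ⟨i₀, c, hc, coeff_eq⟩ := hlead
  have hf : IsYRegular f n d i₀ c := ⟨hy, hx, coeff_eq⟩
  have hfh (i m) : |((bcoeff m (f i) : ℤ) : ℝ)| ≤ Real.exp h := by
    exact_mod_cast hh i m.1 m.2
  obtain ⟨D, q, hD, map_eq, D_le, q_le, reduced⟩ := hg.exists_numerators hf hc hfh
  have mul_le {z : ℤ} (hz : |(z : ℝ)| ≤ Real.exp (Bfun (Fintype.card ι * n) d h)) :
      |((c * z : ℤ) : ℝ)| ≤ Real.exp (Cfun (Fintype.card ι) d (Delta1 n) h) := by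
    rw [Int.cast_mul, abs_mul]
    exact (mul_le_mul (hf.abs_le hfh) hz (abs_nonneg _) (Real.exp_nonneg _)).trans
      (exp_mul_exp_Bfun_le_exp_Cfun _ d n h)
  refine ⟨c * D, mul_ne_zero hc hD, fun j => C (C c) * q j, fun j => ?_, mul_le D_le,
    fun j a b => ?_, fun {F} _ hβ => ?_⟩
  · rw [map_mul, map_eq]
    simp [bivMap, mul_assoc]
  · simpa [bcoeff_apply] using mul_le (q_le j (a, b))
  · obtain ⟨hcF, hDF⟩ : (c : F) ≠ 0 ∧ (D : F) ≠ 0 := by simpa using hβ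
    convert reduced (Int.castRingHom F) hcF hDF using 2 with j
    exact reduction_C_C_mul hcF D (q j)

end HeightBound

/-- let `F = (f_1, …, f_t) ⊂ ℤ[x,y]` (`t ≥ 2`) generate a
zero-dimensional ideal `I ⊆ ℚ[x,y]`, with `y`-degrees at most `d_y`, total degrees at
most `d ≥ 1`, coefficients of absolute value at most `e^h`, and suppose the coefficient
of `y^{d_y}` in some `f_i` is a nonzero integer. Let `G = (g_0, …, g_s)` be the reduced
minimal lexicographic Gröbner basis of `I` (for `x ≺ y`). Then there is a nonzero
integer `β` such that (a) all `β gⱼ` have integer coefficients, (b) `|β|` and all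
coefficients of the `β gⱼ` are at most `exp (C(t,d,Δ₁(d_y),h))` in absolute value, and
(c) for every prime `p ∤ β`, the images of the `gⱼ` in `F_p[x,y]` form the reduced
minimal lexicographic Gröbner basis of `⟨f_1 mod p, …, f_t mod p⟩`. -/
theorem height_bound_case1 {t s : ℕ} (ht : 2 ≤ t)
    (f : Fin t → Biv ℤ) (dy d : ℕ) (hd : 1 ≤ d) (h : ℝ)
    (hydeg : ∀ i, (f i).natDegree ≤ dy)
    (htot : ∀ i, totDeg (f i) ≤ d)
    (hht : ∀ i (a b : ℕ), ((|((f i).coeff a).coeff b| : ℤ) : ℝ) ≤ Real.exp h)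
    (hlead : ∃ i, ∃ c : ℤ, c ≠ 0 ∧ (f i).coeff dy = Polynomial.C c)
    (I : Ideal (Biv ℚ)) (hI : I = Ideal.span (Set.range fun i => toQ (f i)))
    (hdim : FiniteDimensional ℚ (Biv ℚ ⧸ I))
    (g : Fin (s + 1) → Biv ℚ) (hg : IsReducedGB g I) :
    ∃ β : ℤ, β ≠ 0 ∧
      ∃ gz : Fin (s + 1) → Biv ℤ,
        (∀ j, toQ (gz j) = Polynomial.C (Polynomial.C (β : ℚ)) * g j) ∧
        ((|β| : ℝ) ≤ Real.exp (Cfun t d (Delta1 dy) h)) ∧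
        (∀ j (a b : ℕ), ((|((gz j).coeff a).coeff b| : ℤ) : ℝ) ≤
          Real.exp (Cfun t d (Delta1 dy) h)) ∧
        (∀ p : ℕ, p.Prime → ¬ ((p : ℤ) ∣ β) →
          IsReducedGB
            (fun j => Polynomial.C (Polynomial.C ((β : ZMod p))⁻¹) * toP p (gz j))
            (Ideal.span (Set.range fun i => toP p (f i)))) := by
  obtain rfl : I = Ideal.span (Set.range (bivMap (Int.castRingHom ℚ) ∘ f)) := hI
  obtain ⟨β, hβ, gz, map_eq, β_le, gz_le, reduced⟩ := height_bound_case1_general hydeg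
    (fun i a => (natDegree_coeff_le_totDeg (f i) a).trans (htot i)) hht hlead hg
  rw [Fintype.card_fin] at β_le gz_le
  refine ⟨β, hβ, gz, map_eq, β_le, gz_le, fun p hp hpβ => ?_⟩
  have := Fact.mk hp
  exact reduced ((ZMod.intCast_zmod_eq_zero_iff_dvd β p).not.2 hpβ)
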